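/- arXiv:math/0101251 — 11 statements merged into one kernel-verified Lean document; each statement's English description precedes it below -/
import Mathlib

section
/- Let k ≥ 2 and let e₁,…,e_k be integers with e_i ≥ 2 for all i and e_j ≥ 3 for at least one j. Then all four entries of the integer matrix B(e₁−1, e₂, …, e_{k−1}, e_k−1) are positive. -/
/-- The matrix `[[0,-1],[1,x]]`. -/
def Mb (x : ℤ) : Matrix (Fin 2) (Fin 2) ℤ := !![0, -1; 1, x]

/-- The product `[[0,-1],[1,b_k]] ⋯ [[0,-1],[1,b₁]]` for a list `[b₁,…,b_k]`. -/
def prodB (L : List ℤ) : Matrix (Fin 2) (Fin 2) ℤ := ((L.map Mb).reverse).prod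

/-- `B(b₁,…,b_k) = [[0,1],[-1,0]] · [[0,-1],[1,b_k]] ⋯ [[0,-1],[1,b₁]]`. -/
def Bmat (L : List ℤ) : Matrix (Fin 2) (Fin 2) ℤ := !![0, 1; -1, 0] * prodB L

/-- The list `e₁-1, e₂, …, e_{k-1}, e_k-1`. -/
def cuspList (k : ℕ) (e : Fin k → ℤ) : List ℤ :=
  List.ofFn fun i => e i - (if i.val = 0 ∨ i.val = k - 1 then 1 else 0)

theorem prodB_append_singleton (l : List ℤ) (x : ℤ) : prodB (l ++ [x]) = Mb x * prodB l := by
  simp [prodB]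

theorem Mb_mul_zero (x : ℤ) (X : Matrix (Fin 2) (Fin 2) ℤ) (j : Fin 2) :
    (Mb x * X) 0 j = -X 1 j := by
  simp [Mb, Matrix.mul_apply, Fin.sum_univ_two]

theorem Mb_mul_one (x : ℤ) (X : Matrix (Fin 2) (Fin 2) ℤ) (j : Fin 2) :
    (Mb x * X) 1 j = X 0 j + x * X 1 j := by
  simp [Mb, Matrix.mul_apply, Fin.sum_univ_two]

/-- Sign conditions on the entries of `prodB` when only the first entry of the list is decreased.
In the basis where `Mb x` becomes the nonnegative matrix `[[x-1,x-2],[1,1]]`, they say that the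
product stays nonnegative and that its upper right entry is positive once some entry is `≥ 3`. -/
theorem prodB_sub_one_cons_bounds (a : ℤ) (ha : 2 ≤ a) (l : List ℤ) (hl : ∀ x ∈ l, 2 ≤ x) :
    1 ≤ prodB ((a - 1) :: l) 0 0 + prodB ((a - 1) :: l) 1 0 ∧ prodB ((a - 1) :: l) 0 0 ≤ 0 ∧
    0 ≤ prodB ((a - 1) :: l) 0 1 + prodB ((a - 1) :: l) 1 1 ∧ prodB ((a - 1) :: l) 0 1 ≤ -1 ∧
    ((∃ x ∈ a :: l, 3 ≤ x) → 1 ≤ prodB ((a - 1) :: l) 0 1 + prodB ((a - 1) :: l) 1 1) := by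
  induction l using List.reverseRecOn with
  | nil =>
    simp [prodB, Mb]
    omega
  | append_singleton l x ih =>
    obtain ⟨h₁, h₂, h₃, h₄, h₅⟩ := ih fun y hy => hl y (by simp [hy])
    have hx : 2 ≤ x := hl x (by simp)
    rw [← List.cons_append, prodB_append_singleton]
    simp only [Mb_mul_zero, Mb_mul_one]
    refine ⟨by nlinarith, by linarith, by nlinarith, by linarith, ?_⟩
    rintro ⟨y, hy, hy3⟩
    rw [← List.cons_append, List.mem_append, List.mem_singleton] at hy
    rcases hy with hy | rfl
    · have := h₅ ⟨y, hy, hy3⟩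
      nlinarith
    · nlinarith

theorem Bmat_sub_one_cons_append_pos (a b : ℤ) (ha : 2 ≤ a) (hb : 2 ≤ b) (l : List ℤ)
    (hl : ∀ x ∈ l, 2 ≤ x) (h3 : ∃ x ∈ (a :: l) ++ [b], 3 ≤ x) (i j : Fin 2) :
    0 < Bmat (((a - 1) :: l) ++ [b - 1]) i j := by
  obtain ⟨h₁, h₂, h₃, h₄, h₅⟩ := prodB_sub_one_cons_bounds a ha l hl
  have hzero (j : Fin 2) : Bmat (((a - 1) :: l) ++ [b - 1]) 0 j =
      prodB ((a - 1) :: l) 0 j + (b - 1) * prodB ((a - 1) :: l) 1 j := by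
    rw [Bmat, prodB_append_singleton, ← Mb_mul_one]
    simp [Matrix.mul_apply, Fin.sum_univ_two]
  have hone (j : Fin 2) : Bmat (((a - 1) :: l) ++ [b - 1]) 1 j = prodB ((a - 1) :: l) 1 j := by
    rw [Bmat, prodB_append_singleton, ← neg_neg (prodB ((a - 1) :: l) 1 j), ← Mb_mul_zero (b - 1)]
    simp [Matrix.mul_apply, Fin.sum_univ_two]
  have hupper : 0 < prodB ((a - 1) :: l) 0 1 + (b - 1) * prodB ((a - 1) :: l) 1 1 := by
    obtain ⟨y, hy, hy3⟩ := h3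
    rw [List.mem_append, List.mem_singleton] at hy
    rcases hy with hy | rfl
    · have := h₅ ⟨y, hy, hy3⟩
      nlinarith
    · nlinarith
  fin_cases i <;> fin_cases j <;> simp only [Fin.zero_eta, Fin.mk_one, hzero, hone]
  · nlinarith
  · exact hupper
  · linarith
  · linarith

theorem cuspList_add_two (n : ℕ) (e : Fin (n + 2) → ℤ) :
    cuspList (n + 2) e = ((e 0 - 1) :: List.ofFn fun i : Fin n => e i.castSucc.succ) ++
      [e (Fin.last (n + 1)) - 1] := by
  rw [cuspList, List.ofFn_succ, List.ofFn_succ']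
  have h (i : Fin n) : (i : ℕ) ≠ n := i.isLt.ne
  simp [h]

theorem stmt_0 (k : ℕ) (hk : 2 ≤ k) (e : Fin k → ℤ)
    (he : ∀ i, 2 ≤ e i) (he3 : ∃ j, 3 ≤ e j) :
    ∀ i j : Fin 2, 0 < Bmat (cuspList k e) i j := by
  obtain ⟨n, rfl⟩ := Nat.exists_eq_add_of_le' hk
  rw [cuspList_add_two]
  refine Bmat_sub_one_cons_append_pos _ _ (he _) (he _) _ ?_ ?_
  · simp [List.mem_ofFn, he]
  · obtain ⟨j, hj⟩ := he3
    refine ⟨e j, ?_, hj⟩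
    induction j using Fin.cases with
    | zero => simp
    | succ j =>
      induction j using Fin.lastCases with
      | last => simp
      | cast j => simp [List.mem_ofFn]
end

section
/- Let k ≥ 2 and let b₁,…,b_k be integers with b₁ ≥ 1, b_k ≥ 1, b_i ≥ 2 for all 1 < i < k, and with at least one of these inequalities strict (i.e. b₁ > 1, or b_k > 1, or b_i > 2 for some 1 < i < k). Write the matrix product [[0,-1],[1,b_k]] ⋯ [[0,-1],[1,b₁]] as [[-γ,-δ],[α,β]]. Then α, β, γ, δ are all positive; moreover β is the strictly largest of the four if and only if b₁ > 1 and b_k > 1; α is the strictly largest if and only if b₁ = 1 < b_k; δ is the strictly largest if and only if b₁ > 1 = b_k; and γ is the strictly largest if and only if b₁ = 1 = b_k. -/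
lemma prodB_cons (a : ℤ) (L : List ℤ) : prodB (a :: L) = prodB L * Mb a := by
  simp [prodB]

lemma prodB_concat (L : List ℤ) (a : ℤ) : prodB (L ++ [a]) = Mb a * prodB L := by
  simp [prodB]

/-- Entrywise inequalities for `prodB L` when all entries of `L` are at least two. -/
lemma prodB_entries_of_two_le (L : List ℤ) (hL : ∀ a ∈ L, 2 ≤ a) :
    0 ≤ prodB L 1 0 ∧ 0 ≤ -prodB L 0 1 ∧
    -prodB L 0 0 < prodB L 1 0 ∧ -prodB L 0 0 < -prodB L 0 1 ∧
    prodB L 1 0 < prodB L 1 1 ∧ -prodB L 0 1 < prodB L 1 1 ∧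
    0 ≤ prodB L 1 1 - prodB L 1 0 + prodB L 0 1 - prodB L 0 0 ∧
    ((∃ a ∈ L, 2 < a) →
      0 < prodB L 1 1 - prodB L 1 0 + prodB L 0 1 - prodB L 0 0) ∧
    (0 < prodB L 1 1 - prodB L 1 0 + prodB L 0 1 - prodB L 0 0 →
      0 < prodB L 1 0 ∧ 0 < -prodB L 0 1) := by
  induction L with
  | nil => simp [prodB]
  | cons a L ih =>
    have ha : 2 ≤ a := hL a (by simp)
    obtain ⟨hp, hq, hrp, hrq, hpg, hqg, hs, hs', -⟩ :=
      ih fun x hx => hL x (List.mem_cons_of_mem _ hx)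
    have e00 : prodB (a :: L) 0 0 = prodB L 0 1 := by
      simp [prodB_cons, Matrix.mul_apply, Fin.sum_univ_two, Mb]
    have e01 : prodB (a :: L) 0 1 = -prodB L 0 0 + prodB L 0 1 * a := by
      simp [prodB_cons, Matrix.mul_apply, Fin.sum_univ_two, Mb]
    have e10 : prodB (a :: L) 1 0 = prodB L 1 1 := by
      simp [prodB_cons, Matrix.mul_apply, Fin.sum_univ_two, Mb]
    have e11 : prodB (a :: L) 1 1 = -prodB L 1 0 + prodB L 1 1 * a := by
      simp [prodB_cons, Matrix.mul_apply, Fin.sum_univ_two, Mb]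
    rw [e00, e01, e10, e11]
    generalize prodB L 0 0 = r at *
    generalize prodB L 0 1 = q at *
    generalize prodB L 1 0 = p at *
    generalize prodB L 1 1 = g at *
    have hqa : 0 ≤ (a - 2) * -q := mul_nonneg (by omega) hq
    have hga : 0 ≤ (a - 2) * g := mul_nonneg (by omega) (by omega)
    have hgqa : 0 ≤ (a - 2) * (g + q) := mul_nonneg (by omega) (by omega)
    refine ⟨by omega, by linarith, by omega, by linarith, by linarith, by linarith,
      by linarith, ?_, fun _ => ⟨by omega, by linarith⟩⟩
    rintro ⟨x, hx, hx2⟩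
    rcases List.mem_cons.1 hx with rfl | hx
    · have : 0 < (x - 2) * (g + q) := mul_pos (by omega) (by omega)
      linarith
    · have := hs' ⟨x, hx, hx2⟩
      linarith

/-- Positivity and location of the largest entry after bordering a block of continuants
`g, p, q, r` by `x + 1` and `y + 1`. -/
lemma bordered_continuants_compare {g p q r x y : ℤ} (hp : 0 ≤ p) (hq : 0 ≤ q)
    (hrp : r < p) (hrq : r < q) (hpg : p < g) (hqg : q < g) (hs : 0 ≤ g - p - q + r)
    (hspq : 0 < g - p - q + r → 0 < p ∧ 0 < q) (hx : 0 ≤ x) (hy : 0 ≤ y)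
    (hstrict : 0 < x ∨ 0 < y ∨ 0 < g - p - q + r)
    {α β δ : ℤ} (hα : α = (y + 1) * g - q) (hδ : δ = (x + 1) * g - p)
    (hβ : β = (x + 1) * (y + 1) * g - (x + 1) * q - (y + 1) * p + r) :
    0 < α ∧ 0 < β ∧ 0 < g ∧ 0 < δ ∧
    ((α < β ∧ g < β ∧ δ < β) ↔ (0 < x ∧ 0 < y)) ∧
    ((β < α ∧ g < α ∧ δ < α) ↔ (x = 0 ∧ 0 < y)) ∧
    ((α < δ ∧ β < δ ∧ g < δ) ↔ (0 < x ∧ y = 0)) ∧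
    ((α < g ∧ β < g ∧ δ < g) ↔ (x = 0 ∧ y = 0)) := by
  have hg : 0 < g := by omega
  rcases hx.eq_or_lt with rfl | hx <;> rcases hy.eq_or_lt with rfl | hy
  · have := hspq (by omega)
    ring_nf at hα hβ hδ
    omega
  · have h1 : 0 ≤ (y - 1) * (g - p) := mul_nonneg (by omega) (by omega)
    have h2 : 0 ≤ (y - 1) * p := mul_nonneg (by omega) (by omega)
    have h3 : 0 ≤ (y - 1) * g := mul_nonneg (by omega) (by omega)
    ring_nf at hα hβ hδ h1 h2 h3
    omega
  · have h1 : 0 ≤ (x - 1) * (g - q) := mul_nonneg (by omega) (by omega)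
    have h2 : 0 ≤ (x - 1) * q := mul_nonneg (by omega) (by omega)
    have h3 : 0 ≤ (x - 1) * g := mul_nonneg (by omega) (by omega)
    ring_nf at hα hβ hδ h1 h2 h3
    omega
  · have h1 : 0 ≤ (x - 1) * (g - q) := mul_nonneg (by omega) (by omega)
    have h2 : 0 ≤ (y - 1) * (g - p) := mul_nonneg (by omega) (by omega)
    have h3 : 0 ≤ (x - 1) * g := mul_nonneg (by omega) (by omega)
    have h4 : 0 ≤ (y - 1) * g := mul_nonneg (by omega) (by omega)
    have h5 : 0 ≤ (x - 1) * (y - 1) * g :=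
      mul_nonneg (mul_nonneg (by omega) (by omega)) (by omega)
    have hαβ : α < β := by linarith
    have hδβ : δ < β := by linarith
    have hgα : g ≤ α := by linarith
    have hgδ : g ≤ δ := by linarith
    omega

theorem stmt_1 (k : ℕ) (hk : 2 ≤ k) (b : Fin k → ℤ)
    (h1 : 1 ≤ b ⟨0, by omega⟩) (hk1 : 1 ≤ b ⟨k - 1, by omega⟩)
    (hmid : ∀ i : Fin k, 0 < i.val → i.val < k - 1 → 2 ≤ b i)
    (hstrict : 1 < b ⟨0, by omega⟩ ∨ 1 < b ⟨k - 1, by omega⟩ ∨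
      ∃ i : Fin k, 0 < i.val ∧ i.val < k - 1 ∧ 2 < b i) :
    let P := prodB (List.ofFn b)
    let α := P 1 0
    let β := P 1 1
    let γ := -P 0 0
    let δ := -P 0 1
    0 < α ∧ 0 < β ∧ 0 < γ ∧ 0 < δ ∧
    ((α < β ∧ γ < β ∧ δ < β) ↔ (1 < b ⟨0, by omega⟩ ∧ 1 < b ⟨k - 1, by omega⟩)) ∧
    ((β < α ∧ γ < α ∧ δ < α) ↔ (b ⟨0, by omega⟩ = 1 ∧ 1 < b ⟨k - 1, by omega⟩)) ∧
    ((α < δ ∧ β < δ ∧ γ < δ) ↔ (1 < b ⟨0, by omega⟩ ∧ b ⟨k - 1, by omega⟩ = 1)) ∧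
    ((α < γ ∧ β < γ ∧ δ < γ) ↔ (b ⟨0, by omega⟩ = 1 ∧ b ⟨k - 1, by omega⟩ = 1)) := by
  obtain ⟨n, rfl⟩ : ∃ n, k = n + 2 := ⟨k - 2, by omega⟩
  set L : List ℤ := List.ofFn fun i : Fin n => b i.castSucc.succ
  have hlist : List.ofFn b = b 0 :: (L ++ [b (Fin.last (n + 1))]) := by
    rw [List.ofFn_succ, List.ofFn_succ', List.concat_eq_append, Fin.succ_last]
  have hL : ∀ a ∈ L, 2 ≤ a := by
    intro a ha
    obtain ⟨i, rfl⟩ := (List.mem_ofFn' _ _).1 ha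
    exact hmid _ (by simp) (by simp)
  have hfirst : b ⟨0, by omega⟩ = b 0 := rfl
  have hlast : b ⟨n + 2 - 1, by omega⟩ = b (Fin.last (n + 1)) := rfl
  have hmem : (∃ i : Fin (n + 2), 0 < i.val ∧ i.val < n + 2 - 1 ∧ 2 < b i) →
      ∃ a ∈ L, 2 < a := by
    rintro ⟨i, hi0, hi1, hi⟩
    refine ⟨b i, (List.mem_ofFn' _ _).2 ⟨⟨i.val - 1, by omega⟩, ?_⟩, hi⟩
    refine congrArg b (Fin.ext ?_)
    simp only [Fin.val_succ, Fin.val_castSucc]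
    omega
  simp only [hfirst, hlast] at h1 hk1 hstrict ⊢
  obtain ⟨hp, hq, hrp, hrq, hpg, hqg, hs, hs', hspq⟩ := prodB_entries_of_two_le L hL
  have hP : prodB (List.ofFn b) = Mb (b (Fin.last (n + 1))) * prodB L * Mb (b 0) := by
    rw [hlist, prodB_cons, prodB_concat]
  have key := bordered_continuants_compare (x := b 0 - 1) (y := b (Fin.last (n + 1)) - 1)
    hp hq hrp hrq hpg hqg (by linarith) (fun h => hspq (by linarith)) (by omega) (by omega)
    (by
      rcases hstrict with h | h | h
      · exact .inl (by omega)
      · exact .inr (.inl (by omega))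
      · have := hs' (hmem h)
        exact .inr (.inr (by linarith)))
    (α := prodB (List.ofFn b) 1 0) (β := prodB (List.ofFn b) 1 1)
    (δ := -prodB (List.ofFn b) 0 1)
    (by rw [hP]; simp [Matrix.mul_apply, Matrix.vecMul, dotProduct, Fin.sum_univ_two, Mb]; ring)
    (by rw [hP]; simp [Matrix.mul_apply, Matrix.vecMul, dotProduct, Fin.sum_univ_two, Mb]; ring)
    (by rw [hP]; simp [Matrix.mul_apply, Matrix.vecMul, dotProduct, Fin.sum_univ_two, Mb]; ring)
  have hγ : -prodB (List.ofFn b) 0 0 = prodB L 1 1 := by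
    rw [hP]; simp [Matrix.mul_apply, Matrix.vecMul, dotProduct, Fin.sum_univ_two, Mb]
  rw [hγ]
  simpa only [sub_pos, sub_eq_zero] using key
end

section
/- Let a, b, c, d be positive integers with ad − bc = 1, and let π be the group presented below. Then the abelianization π^{ab} of π is a finite group of order 16b. -/
/-- The relators of the fundamental group
`⟨x₁,y₁,x₂,y₂ | x₁⁻¹y₁x₁ = y₁⁻¹, x₂⁻¹y₂x₂ = y₂⁻¹, x₂² = x₁^{2a}y₁^{c}, y₂ = x₁^{2b}y₁^{d}⟩`
of the link of the quotient-cusp classified by `[[a,b],[c,d]]`.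
The generators `x₁, y₁, x₂, y₂` are indexed by `0, 1, 2, 3 : Fin 4`. -/
def quotientCuspRels (a b c d : ℕ) : Set (FreeGroup (Fin 4)) :=
  { (FreeGroup.of 0)⁻¹ * FreeGroup.of 1 * FreeGroup.of 0 * FreeGroup.of 1,
    (FreeGroup.of 2)⁻¹ * FreeGroup.of 3 * FreeGroup.of 2 * FreeGroup.of 3,
    (FreeGroup.of 2) ^ 2 * ((FreeGroup.of 0) ^ (2 * a) * (FreeGroup.of 1) ^ c)⁻¹,
    FreeGroup.of 3 * ((FreeGroup.of 0) ^ (2 * b) * (FreeGroup.of 1) ^ d)⁻¹ }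

/-- The images of the generators in the abelianized group, written additively. -/
def quotientCuspGen (a b c d : ℕ) (i : Fin 4) :
    Additive (Abelianization (PresentedGroup (quotientCuspRels a b c d))) :=
  Additive.ofMul (Abelianization.of (PresentedGroup.of i))

section Relations

variable (a b c d : ℕ)

theorem two_nsmul_quotientCuspGen_one : 2 • quotientCuspGen a b c d 1 = 0 := by
  have h := PresentedGroup.one_of_mem (rels := quotientCuspRels a b c d)
    (x := (FreeGroup.of 0)⁻¹ * FreeGroup.of 1 * FreeGroup.of 0 * FreeGroup.of 1)
    (by simp [quotientCuspRels])
  have h' := congrArg (fun g => Additive.ofMul (Abelianization.of g)) h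
  simp only [map_mul, map_inv, ofMul_mul, ofMul_inv, map_one, ofMul_one] at h'
  change -quotientCuspGen a b c d 0 + quotientCuspGen a b c d 1 + quotientCuspGen a b c d 0
    + quotientCuspGen a b c d 1 = 0 at h'
  rw [← h']
  abel

theorem two_nsmul_quotientCuspGen_three : 2 • quotientCuspGen a b c d 3 = 0 := by
  have h := PresentedGroup.one_of_mem (rels := quotientCuspRels a b c d)
    (x := (FreeGroup.of 2)⁻¹ * FreeGroup.of 3 * FreeGroup.of 2 * FreeGroup.of 3)
    (by simp [quotientCuspRels])
  have h' := congrArg (fun g => Additive.ofMul (Abelianization.of g)) h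
  simp only [map_mul, map_inv, ofMul_mul, ofMul_inv, map_one, ofMul_one] at h'
  change -quotientCuspGen a b c d 2 + quotientCuspGen a b c d 3 + quotientCuspGen a b c d 2
    + quotientCuspGen a b c d 3 = 0 at h'
  rw [← h']
  abel

theorem two_nsmul_quotientCuspGen_two :
    2 • quotientCuspGen a b c d 2 =
      (2 * a) • quotientCuspGen a b c d 0 + c • quotientCuspGen a b c d 1 := by
  have h := PresentedGroup.one_of_mem (rels := quotientCuspRels a b c d)
    (x := (FreeGroup.of 2) ^ 2 * ((FreeGroup.of 0) ^ (2 * a) * (FreeGroup.of 1) ^ c)⁻¹)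
    (by simp [quotientCuspRels])
  have h' := congrArg (fun g => Additive.ofMul (Abelianization.of g)) h
  simp only [map_mul, map_inv, map_pow, ofMul_mul, ofMul_inv, ofMul_pow, map_one, ofMul_one] at h'
  exact add_neg_eq_zero.mp h'

theorem quotientCuspGen_three :
    quotientCuspGen a b c d 3 =
      (2 * b) • quotientCuspGen a b c d 0 + d • quotientCuspGen a b c d 1 := by
  have h := PresentedGroup.one_of_mem (rels := quotientCuspRels a b c d)
    (x := FreeGroup.of 3 * ((FreeGroup.of 0) ^ (2 * b) * (FreeGroup.of 1) ^ d)⁻¹)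
    (by simp [quotientCuspRels])
  have h' := congrArg (fun g => Additive.ofMul (Abelianization.of g)) h
  simp only [map_mul, map_inv, map_pow, ofMul_mul, ofMul_inv, ofMul_pow, map_one, ofMul_one] at h'
  exact add_neg_eq_zero.mp h'

theorem four_mul_nsmul_quotientCuspGen_zero : (4 * b) • quotientCuspGen a b c d 0 = 0 := by
  have h := two_nsmul_quotientCuspGen_three a b c d
  rw [quotientCuspGen_three, smul_add, smul_comm 2 d, two_nsmul_quotientCuspGen_one, smul_zero,
    add_zero, smul_smul] at h
  rw [← h]
  congr 1
  ring

end Relations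

theorem Even.nsmul_eq_zero {A : Type*} [AddMonoid A] {n : ℕ} (hn : Even n) {y : A}
    (hy : 2 • y = 0) : n • y = 0 := by
  obtain ⟨m, rfl⟩ := hn
  rw [← two_mul, mul_nsmul, hy, nsmul_zero]

theorem Odd.nsmul_eq_self {A : Type*} [AddMonoid A] {n : ℕ} (hn : Odd n) {y : A}
    (hy : 2 • y = 0) : n • y = y := by
  obtain ⟨m, rfl⟩ := hn
  rw [add_nsmul, mul_nsmul, hy, nsmul_zero, one_nsmul, zero_add]

/-- An additive group that satisfies the relations, is generated by the images of `x₁, y₁, x₂`,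
and maps compatibly to the abelianized group, is isomorphic to it. -/
theorem nonempty_equiv_abelianization_quotientCusp {a b c d : ℕ} {A : Type*} [AddCommGroup A]
    (v : Fin 4 → A) (h₁ : 2 • v 1 = 0) (h₃ : 2 • v 3 = 0)
    (h₂ : 2 • v 2 = (2 * a) • v 0 + c • v 1) (hv : v 3 = (2 * b) • v 0 + d • v 1)
    (hgen : ∀ u : A, ∃ i j k : ℤ, u = i • v 0 + j • v 1 + k • v 2)
    (f : A →+ Additive (Abelianization (PresentedGroup (quotientCuspRels a b c d))))
    (hf : ∀ i, f (v i) = quotientCuspGen a b c d i) :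
    Nonempty (A ≃ Abelianization (PresentedGroup (quotientCuspRels a b c d))) := by
  have hrels : ∀ r ∈ quotientCuspRels a b c d,
      FreeGroup.lift (fun i => Multiplicative.ofAdd (v i)) r = 1 := by
    rintro r (rfl | rfl | rfl | rfl)
    · apply Multiplicative.toAdd.injective
      simp only [map_mul, map_inv, FreeGroup.lift_apply_of, toAdd_mul, toAdd_inv, toAdd_ofAdd,
        toAdd_one]
      rw [← h₁]
      abel
    · apply Multiplicative.toAdd.injective
      simp only [map_mul, map_inv, FreeGroup.lift_apply_of, toAdd_mul, toAdd_inv, toAdd_ofAdd,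
        toAdd_one]
      rw [← h₃]
      abel
    · apply Multiplicative.toAdd.injective
      simp [h₂]
    · apply Multiplicative.toAdd.injective
      simp [hv]
  let g : Abelianization (PresentedGroup (quotientCuspRels a b c d)) →* Multiplicative A :=
    Abelianization.lift (PresentedGroup.toGroup hrels)
  have hg : ∀ i, g (quotientCuspGen a b c d i).toMul = Multiplicative.ofAdd (v i) := fun i => by
    simp [g, quotientCuspGen]
  have hgf : ∀ u, g (f u).toMul = Multiplicative.ofAdd u := by
    intro u
    obtain ⟨i, j, k, rfl⟩ := hgen u
    simp [hf, hg, toMul_add, toMul_zsmul, ofAdd_add, ofAdd_zsmul]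
  have hfg : (f.toMultiplicativeLeft).comp g = MonoidHom.id _ := by
    ext i
    change (f (g (quotientCuspGen a b c d i).toMul).toAdd).toMul = _
    rw [hg, toAdd_ofAdd, hf]
    rfl
  exact ⟨⟨fun u => (f u).toMul, fun p => (g p).toAdd, fun u => by simp [hgf],
    fun p => DFunLike.congr_fun hfg p⟩⟩

theorem nonempty_equiv_of_even {a b c d : ℕ} (hc : Even c) :
    Nonempty (ZMod (4 * b) × ZMod 2 × ZMod 2 ≃
      Abelianization (PresentedGroup (quotientCuspRels a b c d))) := by
  have two : (2 : ZMod 2) = 0 := rfl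
  have hc2 : (c : ZMod 2) = 0 := (ZMod.natCast_eq_zero_iff_even).2 hc
  have h4 : (4 * b : ZMod (4 * b)) = 0 := by exact_mod_cast ZMod.natCast_self (4 * b)
  let x := quotientCuspGen a b c d
  have hx₀ : (4 * b) • x 0 = 0 := four_mul_nsmul_quotientCuspGen_zero a b c d
  have hx₁ : 2 • x 1 = 0 := two_nsmul_quotientCuspGen_one a b c d
  have hx₂ : 2 • x 2 = (2 * a) • x 0 + c • x 1 := two_nsmul_quotientCuspGen_two a b c d
  have hcx : c • x 1 = 0 := hc.nsmul_eq_zero hx₁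
  have hz : 2 • (x 2 - a • x 0) = 0 := by
    rw [smul_sub, hx₂, hcx, smul_smul, add_zero, sub_self]
  let f₀ := ZMod.lift (4 * b) ⟨zmultiplesHom _ (x 0), (natCast_zsmul _ _).trans hx₀⟩
  let f₁ := ZMod.lift 2 ⟨zmultiplesHom _ (x 1), (natCast_zsmul _ _).trans hx₁⟩
  let f₂ := ZMod.lift 2 ⟨zmultiplesHom _ (x 2 - a • x 0), (natCast_zsmul _ _).trans hz⟩
  have e₀ (n : ℤ) : f₀ n = n • x 0 := by simp [f₀]
  have e₁ (n : ℤ) : f₁ n = n • x 1 := by simp [f₁]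
  have e₂ (n : ℤ) : f₂ n = n • (x 2 - a • x 0) := by simp [f₂]
  refine nonempty_equiv_abelianization_quotientCusp
    ![(1, 0, 0), (0, 1, 0), (a, 0, 1), (2 * b, d, 0)] ?_ ?_ ?_ ?_ ?_
    (f₀.coprod (f₁.coprod f₂)) ?_
  · simp [two]
  · simp [two, ← mul_assoc]
    norm_num [h4]
  · simp [two, hc2]
  · simp
  · rintro ⟨u, v, w⟩
    obtain ⟨i, rfl⟩ := ZMod.intCast_surjective u
    obtain ⟨j, rfl⟩ := ZMod.intCast_surjective v
    obtain ⟨k, rfl⟩ := ZMod.intCast_surjective w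
    exact ⟨i - k * a, j, k, by simp⟩
  · intro i
    have t₀ := e₀ 1
    have t₁ := e₁ 1
    have t₂ := e₂ 1
    have ta := e₀ a
    have tb := e₀ (2 * b : ℕ)
    have td := e₁ d
    push_cast at t₀ t₁ t₂ ta tb td
    fin_cases i
    · simp [t₀, x]
    · simp [t₁, x]
    · simp [t₂, ta, x]
    · simp only [Fin.reduceFinMk, Matrix.cons_val, AddMonoidHom.coprod_apply, tb, td, map_zero,
        add_zero, quotientCuspGen_three]
      simp only [← natCast_zsmul, x]
      push_cast
      rfl

theorem nonempty_equiv_of_odd {a b c d : ℕ} (hc : Odd c) :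
    Nonempty (ZMod (4 * b) × ZMod 4 ≃
      Abelianization (PresentedGroup (quotientCuspRels a b c d))) := by
  have four : (4 : ZMod 4) = 0 := rfl
  have h4 : (4 * b : ZMod (4 * b)) = 0 := by exact_mod_cast ZMod.natCast_self (4 * b)
  have hc2 : (c * 2 : ZMod 4) = 2 := by
    obtain ⟨m, rfl⟩ := hc
    push_cast
    linear_combination (m : ZMod 4) * four
  let x := quotientCuspGen a b c d
  have hx₀ : (4 * b) • x 0 = 0 := four_mul_nsmul_quotientCuspGen_zero a b c d
  have hx₁ : 2 • x 1 = 0 := two_nsmul_quotientCuspGen_one a b c d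
  have hx₂ : 2 • x 2 = (2 * a) • x 0 + c • x 1 := two_nsmul_quotientCuspGen_two a b c d
  have hcx : c • x 1 = x 1 := hc.nsmul_eq_self hx₁
  have hz : 2 • (x 2 - a • x 0) = x 1 := by
    rw [smul_sub, hx₂, hcx, smul_smul, add_sub_cancel_left]
  have hz4 : 4 • (x 2 - a • x 0) = 0 := by
    simpa [← hz, smul_smul] using hx₁
  let f₀ := ZMod.lift (4 * b) ⟨zmultiplesHom _ (x 0), (natCast_zsmul _ _).trans hx₀⟩
  let f₁ := ZMod.lift 4 ⟨zmultiplesHom _ (x 2 - a • x 0), (natCast_zsmul _ _).trans hz4⟩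
  have e₀ (n : ℤ) : f₀ n = n • x 0 := by simp [f₀]
  have e₁ (n : ℤ) : f₁ n = n • (x 2 - a • x 0) := by simp [f₁]
  refine nonempty_equiv_abelianization_quotientCusp
    ![(1, 0), (0, 2), (a, 1), (2 * b, d * 2)] ?_ ?_ ?_ ?_ ?_ (f₀.coprod f₁) ?_
  · simp
    exact four
  · simp
    constructor
    · linear_combination h4
    · linear_combination (d : ZMod 4) * four
  · simp [hc2]
  · simp
  · rintro ⟨u, v⟩
    obtain ⟨i, rfl⟩ := ZMod.intCast_surjective u
    obtain ⟨k, rfl⟩ := ZMod.intCast_surjective v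
    exact ⟨i - k * a, 0, k, by simp⟩
  · intro i
    have t₀ := e₀ 1
    have t₁ := e₁ 1
    have t₂ := e₁ 2
    have ta := e₀ a
    have tb := e₀ (2 * b : ℕ)
    have td := e₁ (d * 2 : ℕ)
    rw [natCast_zsmul, mul_smul, hz] at td
    rw [ofNat_zsmul, hz] at t₂
    push_cast at t₀ t₁ t₂ ta tb td
    fin_cases i
    · simp [t₀, x]
    · simp [t₂, x]
    · simp [t₁, ta, x]
    · simp only [Fin.reduceFinMk, Matrix.cons_val, AddMonoidHom.coprod_apply, tb, td,
        quotientCuspGen_three]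
      simp only [← natCast_zsmul, x]
      push_cast
      rfl

theorem stmt_7 (a b c d : ℕ) (ha : 0 < a) (hb : 0 < b) (hc : 0 < c) (hd : 0 < d)
    (hdet : a * d = b * c + 1) :
    Finite (Abelianization (PresentedGroup (quotientCuspRels a b c d))) ∧
      Nat.card (Abelianization (PresentedGroup (quotientCuspRels a b c d))) = 16 * b := by
  have : NeZero (4 * b) := ⟨by omega⟩
  rcases Nat.even_or_odd c with hc' | hc'
  · obtain ⟨e⟩ := nonempty_equiv_of_even (a := a) (b := b) (d := d) hc'
    refine ⟨Finite.of_equiv _ e, ?_⟩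
    rw [← Nat.card_congr e]
    simp only [Nat.card_prod, Nat.card_zmod]
    ring
  · obtain ⟨e⟩ := nonempty_equiv_of_odd (a := a) (b := b) (d := d) hc'
    refine ⟨Finite.of_equiv _ e, ?_⟩
    rw [← Nat.card_congr e]
    simp only [Nat.card_prod, Nat.card_zmod]
    ring
end

section
/- Let π be the presented group below and set s = (x₁x₂)² x₁^{−2a−2} y₁^{−c} ∈ π. Then the commutator subgroup of π (the kernel of the canonical map π → π^{ab}) equals the subgroup of π generated by the three elements s, x₁^{4b}, and y₁². -/
open scoped commutatorElement

/-- For commuting elements, a unimodular change of basis is inverted by the adjugate matrix. -/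
theorem Commute.mul_pow_mul_pow_eq_of_det {G : Type*} [Group G] {u v : G} (h : Commute u v)
    {a b c d : ℕ} (hdet : a * d = b * c + 1) :
    u * (u ^ b * v ^ d) ^ c = (u ^ a * v ^ c) ^ d := by
  rw [(h.pow_pow b d).mul_pow, (h.pow_pow a c).mul_pow, ← pow_mul, ← pow_mul, ← pow_mul,
    ← pow_mul, hdet, ← mul_assoc, pow_succ', mul_comm d c]

open Subgroup in
/-- If `g` conjugates each generator of a subgroup into it and `g ^ 2` commutes with the
generators, then `g` normalizes the subgroup. -/
theorem mem_normalizer_closure_of_sq_commute {G : Type*} [Group G] {T : Set G} {g : G}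
    (hconj : ∀ t ∈ T, g * t * g⁻¹ ∈ closure T) (hsq : ∀ t ∈ T, Commute (g ^ 2) t) :
    g ∈ normalizer (closure T : Set G) := by
  have conj_mem : ∀ k ∈ closure T, g * k * g⁻¹ ∈ closure T := by
    have hle : closure T ≤ (closure T).comap (MulAut.conj g).toMonoidHom :=
      (closure_le _).2 fun t ht => by simpa using hconj t ht
    intro k hk
    simpa using hle hk
  have sq_comm : ∀ k ∈ closure T, g ^ 2 * k = k * g ^ 2 := by
    have hle : closure T ≤ centralizer {g ^ 2} :=
      (closure_le _).2 fun t ht => mem_centralizer_singleton_iff.2 (hsq t ht).symm.eq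
    intro k hk
    exact (mem_centralizer_singleton_iff.1 (hle hk)).symm
  rw [mem_normalizer_iff]
  refine fun k => ⟨conj_mem k, fun hk => ?_⟩
  have h := sq_comm _ (conj_mem _ hk)
  have hk' : g * (g * k * g⁻¹) * g⁻¹ = g ^ 2 * k * (g ^ 2)⁻¹ := by simp [sq, mul_assoc]
  rw [hk'] at h
  have : k = g * (g * k * g⁻¹) * g⁻¹ := by
    rw [hk']
    calc k = (g ^ 2)⁻¹ * (g ^ 2 * k * (g ^ 2)⁻¹ * g ^ 2) := by group
      _ = (g ^ 2)⁻¹ * (g ^ 2 * (g ^ 2 * k * (g ^ 2)⁻¹)) := by rw [h]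
      _ = g ^ 2 * k * (g ^ 2)⁻¹ := by group
  rw [this]
  exact conj_mem _ hk

open Subgroup in
/-- A subgroup normalized by a generating set is normal. -/
theorem normal_of_closure_eq_top {G : Type*} [Group G] {S : Set G} (hS : closure S = ⊤)
    {K : Subgroup G} (h : ∀ g ∈ S, g ∈ normalizer (K : Set G)) : K.Normal := by
  rw [← normalizer_eq_top_iff, eq_top_iff, ← hS, closure_le]
  exact h

open Subgroup in
/-- A normal subgroup containing the commutators of the elements of a generating set contains the
commutator subgroup. -/
theorem commutator_le_of_generators {G : Type*} [Group G] {S : Set G} (hS : closure S = ⊤)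
    {K : Subgroup G} [K.Normal] (h : ∀ g ∈ S, ∀ k ∈ S, ⁅g, k⁆ ∈ K) : commutator G ≤ K := by
  have hcomm : ∀ g ∈ S, ∀ k ∈ S, Commute (g : G ⧸ K) (k : G ⧸ K) := fun g hg k hk => by
    have := (QuotientGroup.eq_one_iff _).2 (h g hg k hk)
    exact commutatorElement_eq_one_iff_commute.1 this
  have right : ∀ g ∈ S, ∀ k : G, Commute (g : G ⧸ K) (k : G ⧸ K) := fun g hg k => by
    have hle : closure S ≤ (centralizer {(g : G ⧸ K)}).comap (QuotientGroup.mk' K) :=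
      (closure_le _).2 fun k hk => mem_centralizer_singleton_iff.2 (hcomm g hg k hk).symm.eq
    exact (mem_centralizer_singleton_iff.1 (hle (hS ▸ mem_top k))).symm
  have both : ∀ g k : G, Commute (g : G ⧸ K) (k : G ⧸ K) := fun g k => by
    have hle : closure S ≤ (centralizer {(k : G ⧸ K)}).comap (QuotientGroup.mk' K) :=
      (closure_le _).2 fun g hg => mem_centralizer_singleton_iff.2 (right g hg k).eq
    exact mem_centralizer_singleton_iff.1 (hle (hS ▸ mem_top g))
  rw [_root_.commutator_def, commutator_le]
  intro g _ k _
  rw [← QuotientGroup.eq_one_iff]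
  exact commutatorElement_eq_one_iff_commute.2 (both g k)

open Subgroup in
/-- If `x`, `y`, `z` generate a group and `y`, `x ^ 2`, `z ^ 2` are central, then the commutator
subgroup is cyclic, generated by `⁅x, z⁆`. -/
theorem commutator_le_zpowers {Q : Type*} [Group Q] {x y z : Q}
    (hgen : closure {x, y, z} = ⊤) (hxy : Commute x y) (hzy : Commute z y)
    (hxz : Commute (x ^ 2) z) (hzx : Commute (z ^ 2) x) :
    commutator Q ≤ closure {⁅x, z⁆} := by
  have hmem : ⁅x, z⁆ ∈ closure {⁅x, z⁆} := subset_closure rfl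
  have hyt : Commute y ⁅x, z⁆ := by
    rw [commutatorElement_def]
    exact ((hxy.symm.mul_right hzy.symm).mul_right hxy.symm.inv_right).mul_right
      hzy.symm.inv_right
  have hxinv : x * ⁅x, z⁆ * x⁻¹ = ⁅x, z⁆⁻¹ := by
    rw [commutatorElement_def]
    calc x * (x * z * x⁻¹ * z⁻¹) * x⁻¹ = x ^ 2 * z * x⁻¹ * z⁻¹ * x⁻¹ := by
          simp [sq, mul_assoc]
      _ = z * x ^ 2 * x⁻¹ * z⁻¹ * x⁻¹ := by rw [hxz.eq]
      _ = (x * z * x⁻¹ * z⁻¹)⁻¹ := by group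
  have hzinv : z * ⁅x, z⁆ * z⁻¹ = ⁅x, z⁆⁻¹ := by
    rw [commutatorElement_def]
    have h : x⁻¹ * (z ^ 2)⁻¹ = (z ^ 2)⁻¹ * x⁻¹ := (hzx.symm.inv_inv).eq
    calc z * (x * z * x⁻¹ * z⁻¹) * z⁻¹ = z * x * z * (x⁻¹ * (z ^ 2)⁻¹) := by group
      _ = z * x * z * ((z ^ 2)⁻¹ * x⁻¹) := by rw [h]
      _ = (x * z * x⁻¹ * z⁻¹)⁻¹ := by group
  have : (closure {⁅x, z⁆}).Normal := by
    refine normal_of_closure_eq_top hgen ?_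
    rintro g (rfl | rfl | rfl) <;> refine mem_normalizer_closure_of_sq_commute ?_ ?_ <;>
      rintro t rfl
    · rw [hxinv]; exact inv_mem hmem
    · rw [commutatorElement_def]
      have hx : Commute (g ^ 2) g := (Commute.refl g).pow_left 2
      exact ((hx.mul_right hxz).mul_right hx.inv_right).mul_right hxz.inv_right
    · rw [hyt.eq, mul_inv_cancel_right]; exact hmem
    · exact hyt.pow_left 2
    · rw [hzinv]; exact inv_mem hmem
    · rw [commutatorElement_def]
      have hz : Commute (g ^ 2) g := (Commute.refl g).pow_left 2
      exact ((hzx.mul_right hz).mul_right hzx.inv_right).mul_right hz.inv_right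
  refine commutator_le_of_generators hgen ?_
  rintro g (rfl | rfl | rfl) k (rfl | rfl | rfl)
  · simp [one_mem]
  · rw [commutatorElement_eq_one_iff_commute.2 hxy]; exact one_mem _
  · exact hmem
  · rw [commutatorElement_eq_one_iff_commute.2 hxy.symm]; exact one_mem _
  · simp [one_mem]
  · rw [commutatorElement_eq_one_iff_commute.2 hzy.symm]; exact one_mem _
  · rw [← commutatorElement_inv k g]; exact inv_mem hmem
  · rw [commutatorElement_eq_one_iff_commute.2 hzy]; exact one_mem _
  · simp [one_mem]

open Subgroup in
/-- The commutator subgroup of a group generated by elements satisfying the quotient-cusp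
relations. -/
theorem commutator_eq_closure_of_relations {G : Type*} [Group G] {a b c d : ℕ}
    (hdet : a * d = b * c + 1) {x y z w : G} (hgen : closure {x, y, z} = ⊤)
    (hxy : x⁻¹ * y * x * y = 1) (hzw : z⁻¹ * w * z * w = 1)
    (hz : z ^ 2 = x ^ (2 * a) * y ^ c) (hw : w = x ^ (2 * b) * y ^ d) :
    commutator G =
      closure {(x * z) ^ 2 * (x ^ (2 * a + 2))⁻¹ * (y ^ c)⁻¹, x ^ (4 * b), y ^ 2} := by
  have hyx : x * y * x⁻¹ = y⁻¹ := by
    have h : y * x * y = x := by simpa [mul_assoc] using congrArg (x * ·) hxy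
    rw [mul_inv_eq_iff_eq_mul, eq_inv_mul_iff_mul_eq, ← mul_assoc, h]
  have hwz : z * w * z⁻¹ = w⁻¹ := by
    have h : w * z * w = z := by simpa [mul_assoc] using congrArg (z * ·) hzw
    rw [mul_inv_eq_iff_eq_mul, eq_inv_mul_iff_mul_eq, ← mul_assoc, h]
  have hXy : Commute (x ^ 2) y := by
    rw [commute_iff_eq, ← mul_inv_eq_iff_eq_mul]
    calc x ^ 2 * y * (x ^ 2)⁻¹ = x * (x * y * x⁻¹) * x⁻¹ := by simp [sq, mul_assoc]
      _ = x * y⁻¹ * x⁻¹ := by rw [hyx]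
      _ = (x * y * x⁻¹)⁻¹ := by group
      _ = y := by rw [hyx, inv_inv]
  have hZX : Commute (z ^ 2) (x ^ 2) := by
    rw [hz, pow_mul]
    exact ((Commute.refl _).pow_left a).mul_left (hXy.symm.pow_left c)
  have hZy : Commute (z ^ 2) y := by
    rw [hz, pow_mul]
    exact (hXy.pow_left a).mul_left ((Commute.refl y).pow_left c)
  have hwX : Commute w (x ^ 2) := by
    rw [hw, pow_mul]
    exact ((Commute.refl _).pow_left b).mul_left (hXy.symm.pow_left d)
  have hwy : Commute w y := by
    rw [hw, pow_mul]
    exact (hXy.pow_left b).mul_left ((Commute.refl y).pow_left d)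
  have hZw : Commute (z ^ 2) w := by
    rw [hw, pow_mul]
    exact (hZX.pow_right b).mul_right (hZy.pow_right d)
  -- The inverse of the base change `(x ^ 2, y) ↦ (z ^ 2, w)`.
  have hX : x ^ 2 * w ^ c = (z ^ 2) ^ d := by
    rw [hz, hw, pow_mul, pow_mul, hXy.mul_pow_mul_pow_eq_of_det hdet]
  have hy : y * (z ^ 2) ^ b = w ^ a := by
    have hdet' : d * a = c * b + 1 := by rw [mul_comm, hdet, mul_comm b]
    rw [hz, hw, pow_mul, pow_mul, (hXy.pow_pow a c).eq, (hXy.pow_pow b d).eq,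
      hXy.symm.mul_pow_mul_pow_eq_of_det hdet']
  have conj_pow (g : G) (n : ℕ) : z * g ^ n * z⁻¹ = (z * g * z⁻¹) ^ n := (_root_.conj_pow).symm
  have conjZ (n : ℕ) : z * (z ^ 2) ^ n * z⁻¹ = (z ^ 2) ^ n := by
    rw [← pow_mul, ← pow_succ', pow_succ, mul_inv_cancel_right]
  have conjX : z * x ^ 2 * z⁻¹ = x ^ 2 * (w ^ 2) ^ c := by
    have h := congrArg (fun g => z * g * z⁻¹) hX
    simp only [conjZ] at h
    have h' : z * (x ^ 2 * w ^ c) * z⁻¹ = z * x ^ 2 * z⁻¹ * (z * w ^ c * z⁻¹) := by group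
    rw [h', conj_pow w, hwz, ← hX, inv_pow, mul_inv_eq_iff_eq_mul] at h
    rw [h, mul_assoc, ← pow_add, ← pow_mul, two_mul]
  have conjy : z * y * z⁻¹ = y * ((w ^ 2) ^ a)⁻¹ := by
    have h := congrArg (fun g => z * g * z⁻¹) hy
    have h' : z * (y * (z ^ 2) ^ b) * z⁻¹ = z * y * z⁻¹ * (z * (z ^ 2) ^ b * z⁻¹) := by group
    simp only [h', conjZ, conj_pow w, hwz] at h
    rw [← eq_mul_inv_iff_mul_eq] at hy h
    have hc : Commute (w ^ a) ((z ^ 2) ^ b) := (hZw.symm.pow_left a).pow_right b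
    have hw2 : (w ^ 2) ^ a = w ^ a * w ^ a := by rw [← pow_mul, two_mul, pow_add]
    rw [h, hy, hw2, inv_pow, mul_assoc, ← ((hc.mul_left hc).inv_inv).eq]
    group
  set B : Subgroup G := closure {x ^ (4 * b), y ^ 2} with hB
  have hxB : x ^ (4 * b) ∈ B := subset_closure (by simp)
  have hyB : y ^ 2 ∈ B := subset_closure (by simp)
  have hx4 : x ^ (4 * b) = (x ^ 2) ^ (2 * b) := by rw [← pow_mul]; congr 1; ring
  have hw2 : w ^ 2 = x ^ (4 * b) * (y ^ 2) ^ d := by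
    rw [hw, pow_mul, (hXy.pow_pow b d).mul_pow, ← pow_mul, ← pow_mul, ← pow_mul, ← pow_mul,
      mul_comm d 2]
    congr 2; ring
  have hwB : w ^ 2 ∈ B := by
    rw [hw2]
    exact mul_mem hxB (pow_mem hyB d)
  have hcommB : ∀ g : G, Commute g (x ^ 2) → Commute g y →
      ∀ t ∈ ({x ^ (4 * b), y ^ 2} : Set G), Commute g t := by
    rintro g h₁ h₂ t (rfl | rfl)
    · rw [hx4]; exact h₁.pow_right _
    · exact h₂.pow_right _
  have : B.Normal := by
    refine normal_of_closure_eq_top hgen ?_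
    rintro g (rfl | rfl | rfl) <;> refine mem_normalizer_closure_of_sq_commute ?_ ?_
    · rintro t (rfl | rfl)
      · rw [((Commute.refl g).pow_right _).eq, mul_inv_cancel_right]; exact hxB
      · rw [← _root_.conj_pow, hyx, inv_pow]; exact inv_mem hyB
    · exact hcommB _ (Commute.refl _) hXy
    · intro t ht
      rw [(hcommB g hXy.symm (Commute.refl g) t ht).eq, mul_inv_cancel_right]
      exact subset_closure ht
    · exact hcommB _ (hXy.symm.pow_left 2) ((Commute.refl g).pow_left 2)
    · rintro t (rfl | rfl)
      · rw [hx4, conj_pow, conjX, (((hwX.pow_left 2).pow_left c).symm).mul_pow, ← hx4]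
        exact mul_mem hxB (pow_mem (pow_mem hwB _) _)
      · rw [conj_pow, conjy, (((hwy.pow_left 2).pow_left a).inv_left.symm).mul_pow]
        exact mul_mem hyB (pow_mem (inv_mem (pow_mem hwB _)) _)
    · exact hcommB _ hZX hZy
  have hs : (x * z) ^ 2 * (x ^ (2 * a + 2))⁻¹ * (y ^ c)⁻¹ = x * ⁅x, z⁆⁻¹ * x⁻¹ := by
    have h : y ^ c * x ^ (2 * a + 2) = x ^ 2 * z ^ 2 := by
      rw [← hZX.eq, hz, pow_add, ← mul_assoc, pow_mul, ((hXy.pow_left a).pow_right c).eq]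
    rw [mul_assoc, ← mul_inv_rev, h, commutatorElement_def]
    simp [sq, mul_assoc]
  apply le_antisymm
  · set φ := QuotientGroup.mk' B with hφ
    have hφone : ∀ g ∈ B, φ g = 1 := fun g hg => (QuotientGroup.eq_one_iff g).2 hg
    have hgen' : closure {φ x, φ y, φ z} = ⊤ := by
      have h := congrArg (Subgroup.map φ) hgen
      rw [MonoidHom.map_closure, Subgroup.map_top_of_surjective φ (QuotientGroup.mk'_surjective B)]
        at h
      simpa [Set.image_insert_eq] using h
    have hxyQ : Commute (φ x) (φ y) := by
      have h := congrArg φ hyx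
      have h2 : φ y * φ y = 1 := by rw [← map_mul, ← sq]; exact hφone _ hyB
      rw [map_mul, map_mul, map_inv, map_inv, inv_eq_of_mul_eq_one_left h2,
        mul_inv_eq_iff_eq_mul] at h
      exact h
    have hzyQ : Commute (φ z) (φ y) := by
      have h := congrArg φ conjy
      rw [map_mul φ y, hφone _ (inv_mem (pow_mem hwB a)), mul_one, map_mul, map_mul, map_inv,
        mul_inv_eq_iff_eq_mul] at h
      exact h
    have hxzQ : Commute (φ x ^ 2) (φ z) := by
      have h := congrArg φ conjX
      rw [map_mul φ (x ^ 2), hφone _ (pow_mem hwB c), mul_one, map_mul, map_mul, map_inv,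
        mul_inv_eq_iff_eq_mul, map_pow] at h
      exact h.symm
    have hzxQ : Commute (φ z ^ 2) (φ x) := by
      rw [← map_pow, hz, map_mul, map_pow, map_pow]
      exact ((Commute.refl _).pow_left _).mul_left (hxyQ.symm.pow_left c)
    have hle := commutator_le_zpowers hgen' hxyQ hzyQ hxzQ hzxQ
    have hsφ : φ (x * ⁅x, z⁆⁻¹ * x⁻¹) = ⁅φ x, φ z⁆ := by
      simp only [map_mul, map_inv, commutatorElement_def]
      have h : φ x * φ x * φ z = φ z * (φ x * φ x) := by rw [← sq]; exact hxzQ.eq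
      calc φ x * (φ x * φ z * (φ x)⁻¹ * (φ z)⁻¹)⁻¹ * (φ x)⁻¹
          = φ x * φ z * φ x * (φ x * φ x * φ z)⁻¹ := by group
        _ = φ x * φ z * φ x * (φ z * (φ x * φ x))⁻¹ := by rw [h]
        _ = φ x * φ z * (φ x)⁻¹ * (φ z)⁻¹ := by group
    intro g hg
    have hgQ : φ g ∈ commutator (G ⧸ B) := by
      have h : (commutator G).map φ ≤ commutator (G ⧸ B) := by
        rw [_root_.commutator_def, map_commutator]
        exact commutator_mono le_top le_top
      exact h (mem_map_of_mem φ hg)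
    obtain ⟨n, hn⟩ := mem_closure_singleton.1 (hle hgQ)
    rw [← hsφ, ← map_zpow, hφ, QuotientGroup.mk'_apply, QuotientGroup.mk'_apply,
      QuotientGroup.eq] at hn
    rw [hs]
    have hBle : B ≤ closure {x * ⁅x, z⁆⁻¹ * x⁻¹, x ^ (4 * b), y ^ 2} :=
      closure_mono (Set.subset_insert _ _)
    have := mul_mem (zpow_mem (subset_closure (Set.mem_insert _ _)) n) (hBle hn)
    rwa [mul_inv_cancel_left] at this
  · have hxz : ⁅x, z⁆ ∈ commutator G := commutator_mem_commutator (mem_top x) (mem_top z)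
    have hyC : y ^ 2 ∈ commutator G := by
      have h : ⁅x, y⁆ = (y ^ 2)⁻¹ := by rw [commutatorElement_def, hyx]; group
      rw [← inv_mem_iff, ← h]
      exact commutator_mem_commutator (mem_top x) (mem_top y)
    have hwC : w ^ 2 ∈ commutator G := by
      have h : ⁅z, w⁆ = (w ^ 2)⁻¹ := by rw [commutatorElement_def, hwz]; group
      rw [← inv_mem_iff, ← h]
      exact commutator_mem_commutator (mem_top z) (mem_top w)
    rw [closure_le, hs]
    rintro g (rfl | rfl | rfl)
    · exact Subgroup.Normal.conj_mem inferInstance _ (inv_mem hxz) x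
    · rw [hw2] at hwC
      exact (mul_mem_cancel_right (pow_mem hyC d)).1 hwC
    · exact hyC

theorem stmt_8 (a b c d : ℕ) (ha : 0 < a) (hb : 0 < b) (hc : 0 < c) (hd : 0 < d)
    (hdet : a * d = b * c + 1) :
    commutator (PresentedGroup (quotientCuspRels a b c d)) =
      Subgroup.closure
        { ((PresentedGroup.of 0 * PresentedGroup.of 2) ^ 2 *
            ((PresentedGroup.of 0) ^ (2 * a + 2))⁻¹ * ((PresentedGroup.of 1) ^ c)⁻¹ :
            PresentedGroup (quotientCuspRels a b c d)),
          (PresentedGroup.of 0) ^ (4 * b), (PresentedGroup.of 1) ^ 2 } := by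
  have rel : ∀ r ∈ quotientCuspRels a b c d,
      PresentedGroup.mk (quotientCuspRels a b c d) r = 1 :=
    fun r hr => PresentedGroup.one_of_mem hr
  have hw : (PresentedGroup.of 3 : PresentedGroup (quotientCuspRels a b c d)) =
      PresentedGroup.of 0 ^ (2 * b) * PresentedGroup.of 1 ^ d :=
    mul_inv_eq_one.1 (rel (FreeGroup.of 3 * (FreeGroup.of 0 ^ (2 * b) * FreeGroup.of 1 ^ d)⁻¹)
      (by simp [quotientCuspRels]))
  refine commutator_eq_closure_of_relations hdet (w := PresentedGroup.of 3) ?_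
    (rel ((FreeGroup.of 0)⁻¹ * FreeGroup.of 1 * FreeGroup.of 0 * FreeGroup.of 1)
      (by simp [quotientCuspRels]))
    (rel ((FreeGroup.of 2)⁻¹ * FreeGroup.of 3 * FreeGroup.of 2 * FreeGroup.of 3)
      (by simp [quotientCuspRels]))
    (mul_inv_eq_one.1 (rel
      (FreeGroup.of 2 ^ 2 * (FreeGroup.of 0 ^ (2 * a) * FreeGroup.of 1 ^ c)⁻¹)
      (by simp [quotientCuspRels]))) hw
  rw [eq_top_iff, ← PresentedGroup.closure_range_of, Subgroup.closure_le]
  rintro _ ⟨i, rfl⟩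
  fin_cases i
  · exact Subgroup.subset_closure (by simp)
  · exact Subgroup.subset_closure (by simp)
  · exact Subgroup.subset_closure (by simp)
  · change PresentedGroup.of 3 ∈ Subgroup.closure _
    rw [hw]
    exact mul_mem (pow_mem (Subgroup.subset_closure (by simp)) _)
      (pow_mem (Subgroup.subset_closure (by simp)) _)
end

section
/- Let π be the presented group below and set s = (x₁x₂)² x₁^{−2a−2} y₁^{−c} ∈ π. Then the subgroup of π generated by s, x₁^{4b}, y₁² equals the subgroup of π generated by s, x₂^{4b}, y₂². -/
/-- For commuting `U` and `V`, a unimodular change of basis of `⟨U, V⟩` does not change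
the subgroup generated together with a further element `s`. -/
theorem closure_triple_eq_of_unimodular {G : Type*} [Group G] {U V : G} (h : Commute U V)
    (s : G) (a n d : ℕ) (hdet : a * d = n + 1) :
    Subgroup.closure {s, U, V} = Subgroup.closure {s, U ^ a * V ^ n, U * V ^ d} := by
  apply le_antisymm
  · set K := Subgroup.closure {s, U ^ a * V ^ n, U * V ^ d}
    have hs : s ∈ K := Subgroup.subset_closure (by simp)
    have hP : U ^ a * V ^ n ∈ K := Subgroup.subset_closure (by simp)
    have hQ : U * V ^ d ∈ K := Subgroup.subset_closure (by simp)
    have hVeq : V = (U ^ a * V ^ n)⁻¹ * (U * V ^ d) ^ a := by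
      rw [(h.pow_right d).mul_pow, ← pow_mul, mul_comm d a, hdet, pow_succ V n]
      group
    have hV : V ∈ K := by
      rw [hVeq]
      exact K.mul_mem (K.inv_mem hP) (K.pow_mem hQ a)
    have hU : U ∈ K := (K.mul_mem_cancel_right (K.pow_mem hV d)).mp hQ
    rw [Subgroup.closure_le]
    rintro g (rfl | rfl | rfl) <;> assumption
  · set K := Subgroup.closure {s, U, V}
    have hs : s ∈ K := Subgroup.subset_closure (by simp)
    have hU : U ∈ K := Subgroup.subset_closure (by simp)
    have hV : V ∈ K := Subgroup.subset_closure (by simp)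
    rw [Subgroup.closure_le]
    rintro g (rfl | rfl | rfl)
    · exact hs
    · exact K.mul_mem (K.pow_mem hU a) (K.pow_mem hV n)
    · exact K.mul_mem hU (K.pow_mem hV d)

/-- If `x` inverts `y` by conjugation, then `x ^ 2` commutes with `y`. -/
theorem commute_sq_of_conj_mul_eq_one {G : Type*} [Group G] {x y : G}
    (h : x⁻¹ * y * x * y = 1) : Commute (x ^ 2) y := by
  have hinv : x⁻¹ * y * x = y⁻¹ := eq_inv_of_mul_eq_one_left h
  have hyx : y * x = x * y⁻¹ := by rw [← hinv]; group
  have hyx' : y⁻¹ * x = x * y := by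
    have := congrArg (·⁻¹) hinv
    simp only [mul_inv_rev, inv_inv] at this
    exact inv_mul_eq_iff_eq_mul.mp this
  have : y * x ^ 2 = x ^ 2 * y := by
    rw [pow_two, ← mul_assoc, hyx, mul_assoc, hyx', mul_assoc]
  exact this.symm

theorem stmt_9 (a b c d : ℕ) (ha : 0 < a) (hb : 0 < b) (hc : 0 < c) (hd : 0 < d)
    (hdet : a * d = b * c + 1) :
    Subgroup.closure
        { ((PresentedGroup.of 0 * PresentedGroup.of 2) ^ 2 *
            ((PresentedGroup.of 0) ^ (2 * a + 2))⁻¹ * ((PresentedGroup.of 1) ^ c)⁻¹ :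
            PresentedGroup (quotientCuspRels a b c d)),
          (PresentedGroup.of 0) ^ (4 * b), (PresentedGroup.of 1) ^ 2 } =
      Subgroup.closure
        { ((PresentedGroup.of 0 * PresentedGroup.of 2) ^ 2 *
            ((PresentedGroup.of 0) ^ (2 * a + 2))⁻¹ * ((PresentedGroup.of 1) ^ c)⁻¹ :
            PresentedGroup (quotientCuspRels a b c d)),
          (PresentedGroup.of 2) ^ (4 * b), (PresentedGroup.of 3) ^ 2 } := by
  set x₁ : PresentedGroup (quotientCuspRels a b c d) := PresentedGroup.of 0
  set y₁ : PresentedGroup (quotientCuspRels a b c d) := PresentedGroup.of 1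
  set x₂ : PresentedGroup (quotientCuspRels a b c d) := PresentedGroup.of 2
  set y₂ : PresentedGroup (quotientCuspRels a b c d) := PresentedGroup.of 3
  have hconj : x₁⁻¹ * y₁ * x₁ * y₁ = 1 :=
    PresentedGroup.one_of_mem (rels := quotientCuspRels a b c d)
      (x := (FreeGroup.of 0)⁻¹ * FreeGroup.of 1 * FreeGroup.of 0 * FreeGroup.of 1)
      (by simp [quotientCuspRels])
  have hx₂ : x₂ ^ 2 = x₁ ^ (2 * a) * y₁ ^ c :=
    mul_inv_eq_one.mp <| PresentedGroup.one_of_mem (rels := quotientCuspRels a b c d)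
      (x := (FreeGroup.of 2) ^ 2 * ((FreeGroup.of 0) ^ (2 * a) * (FreeGroup.of 1) ^ c)⁻¹)
      (by simp [quotientCuspRels])
  have hy₂ : y₂ = x₁ ^ (2 * b) * y₁ ^ d :=
    mul_inv_eq_one.mp <| PresentedGroup.one_of_mem (rels := quotientCuspRels a b c d)
      (x := FreeGroup.of 3 * ((FreeGroup.of 0) ^ (2 * b) * (FreeGroup.of 1) ^ d)⁻¹)
      (by simp [quotientCuspRels])
  have hcomm : Commute (x₁ ^ 2) y₁ := commute_sq_of_conj_mul_eq_one hconj
  have hcomm_pow (m n : ℕ) : Commute (x₁ ^ (2 * m)) (y₁ ^ n) := by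
    rw [pow_mul]
    exact hcomm.pow_pow m n
  have hx₂_pow : x₂ ^ (4 * b) = (x₁ ^ (4 * b)) ^ a * (y₁ ^ 2) ^ (b * c) := by
    rw [show 4 * b = 2 * (2 * b) by ring, pow_mul x₂, hx₂, (hcomm_pow a c).mul_pow]
    simp only [← pow_mul]
    congr 2 <;> ring
  have hy₂_sq : y₂ ^ 2 = x₁ ^ (4 * b) * (y₁ ^ 2) ^ d := by
    rw [hy₂, (hcomm_pow b d).mul_pow]
    simp only [← pow_mul]
    congr 2 <;> ring
  have hUV : Commute (x₁ ^ (4 * b)) (y₁ ^ 2) := by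
    rw [show 4 * b = 2 * (2 * b) by ring]
    exact hcomm_pow (2 * b) 2
  rw [hx₂_pow, hy₂_sq]
  exact closure_triple_eq_of_unimodular hUV _ a (b * c) d hdet
end

section
/- In the presented group π below, with z = x₁x₂, the conjugation formulas z⁻¹ x₁^{4b} z = x₁^{4b(ad+bc)} y₁^{4bcd} and z⁻¹ y₁² z = x₁^{8ab} y₁^{2(ad+bc)} hold. (Thus z acts on the free abelian subgroup generated by x₁^{4b} and y₁² by the matrix [[ad+bc, 2a],[2bcd, ad+bc]].) -/
section CommutingPowers

variable {G : Type*} [Group G] {p q : G}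

/-- Multiplication of monomials in two commuting elements. -/
lemma Commute.pow_mul_pow_mul_pow_mul_pow (h : Commute p q) (i j k l : ℕ) :
    (p ^ i * q ^ j) * (p ^ k * q ^ l) = p ^ (i + k) * q ^ (j + l) := by
  rw [pow_add, pow_add, mul_assoc, ← mul_assoc (q ^ j), ← (h.pow_pow k j).eq]
  simp only [mul_assoc]

/-- Powers of monomials in two commuting elements. -/
lemma Commute.pow_mul_pow_pow (h : Commute p q) (i j n : ℕ) :
    (p ^ i * q ^ j) ^ n = p ^ (i * n) * q ^ (j * n) := by
  rw [(h.pow_pow i j).mul_pow, ← pow_mul, ← pow_mul]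

/-- If an endomorphism fixes `p ^ a * q ^ c` and inverts `p ^ b * q ^ d`, where `p` and `q` commute
and `a * d - b * c = 1`, then its values at `p` and `q⁻¹` are monomials in `p` and `q`. -/
lemma Commute.map_of_fixes_of_inverts (h : Commute p q) {a b c d : ℕ}
    (hdet : a * d = b * c + 1) (f : G →* G)
    (hfix : f (p ^ a * q ^ c) = p ^ a * q ^ c)
    (hinv : f (p ^ b * q ^ d) = (p ^ b * q ^ d)⁻¹) :
    f p = p ^ (a * d + b * c) * q ^ (2 * c * d) ∧
      f q⁻¹ = p ^ (2 * a * b) * q ^ (a * d + b * c) := by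
  have hp : p * (p ^ b * q ^ d) ^ c = (p ^ a * q ^ c) ^ d := by
    rw [h.pow_mul_pow_pow, h.pow_mul_pow_pow, ← mul_assoc, ← pow_succ', hdet, mul_comm d c]
  have hq : q * (p ^ a * q ^ c) ^ b = (p ^ b * q ^ d) ^ a := by
    have := h.pow_mul_pow_mul_pow_mul_pow 0 1 (a * b) (c * b)
    rw [h.pow_mul_pow_pow, h.pow_mul_pow_pow]
    rw [pow_zero, one_mul, pow_one] at this
    rw [this, mul_comm d a, hdet]
    congr 2 <;> ring
  have hfp := congrArg f hp
  have hfq := congrArg f hq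
  rw [map_mul, map_pow, map_pow, hfix, hinv, inv_pow, mul_inv_eq_iff_eq_mul] at hfp
  rw [map_mul, map_pow, map_pow, hfix, hinv, inv_pow, ← eq_mul_inv_iff_mul_eq] at hfq
  constructor
  · rw [hfp, h.pow_mul_pow_pow, h.pow_mul_pow_pow, h.pow_mul_pow_mul_pow_mul_pow]
    congr 2
    ring
  · rw [map_inv, hfq, mul_inv_rev, inv_inv, inv_inv, h.pow_mul_pow_pow, h.pow_mul_pow_pow,
      h.pow_mul_pow_mul_pow_mul_pow]
    congr 2 <;> ring

end CommutingPowers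

/-- The conjugation formulas in any group whose elements satisfy the quotient-cusp relations. -/
lemma conj_formulas_of_quotientCusp_relations {G : Type*} [Group G] {x y s t : G} {a b c d : ℕ}
    (hdet : a * d = b * c + 1) (hxy : x⁻¹ * y * x = y⁻¹) (hst : s⁻¹ * t * s = t⁻¹)
    (hs : s ^ 2 = x ^ (2 * a) * y ^ c) (ht : t = x ^ (2 * b) * y ^ d) :
    (x * s)⁻¹ * x ^ (4 * b) * (x * s) =
        x ^ (4 * b * (a * d + b * c)) * y ^ (4 * b * c * d) ∧
      (x * s)⁻¹ * y ^ 2 * (x * s) = x ^ (8 * a * b) * y ^ (2 * (a * d + b * c)) := by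
  have hyx : y * x = x * y⁻¹ := by rw [← hxy]; group
  have hyx' : y⁻¹ * x = x * y := by
    rw [inv_mul_eq_iff_eq_mul, ← mul_assoc, hyx, inv_mul_cancel_right]
  have hcomm : Commute (x ^ 2) y := by
    show x ^ 2 * y = y * x ^ 2
    rw [pow_two, ← mul_assoc y, hyx, mul_assoc x y⁻¹ x, hyx', mul_assoc]
  let f : G →* G := (MulAut.conj s⁻¹).toMonoidHom
  have hf (g : G) : f g = s⁻¹ * g * s := by simp [f]
  obtain ⟨hfx, hfy⟩ := hcomm.map_of_fixes_of_inverts hdet f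
    (by rw [← pow_mul, ← hs, hf]; group) (by rw [← pow_mul, ← ht, hf, hst])
  constructor
  · have key : (x * s)⁻¹ * x ^ (4 * b) * (x * s) = f (x ^ 2) ^ (2 * b) := by
      rw [← map_pow, ← pow_mul, hf, ← mul_assoc 2 2 b]
      group
    rw [key, hfx, hcomm.pow_mul_pow_pow, ← pow_mul]
    congr 2 <;> ring
  · have key : (x * s)⁻¹ * y ^ 2 * (x * s) = f y⁻¹ ^ 2 := by
      rw [← map_pow, hf, ← hxy]
      simp only [pow_two]
      group
    rw [key, hfy, hcomm.pow_mul_pow_pow, ← pow_mul]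
    congr 2 <;> ring

theorem stmt_11 (a b c d : ℕ) (ha : 0 < a) (hb : 0 < b) (hc : 0 < c) (hd : 0 < d)
    (hdet : a * d = b * c + 1) :
    let z : PresentedGroup (quotientCuspRels a b c d) :=
      PresentedGroup.of 0 * PresentedGroup.of 2
    (z⁻¹ * (PresentedGroup.of 0) ^ (4 * b) * z =
        (PresentedGroup.of 0) ^ (4 * b * (a * d + b * c)) *
          (PresentedGroup.of 1) ^ (4 * b * c * d)) ∧
      (z⁻¹ * (PresentedGroup.of 1) ^ 2 * z =
        (PresentedGroup.of 0) ^ (8 * a * b) *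
          (PresentedGroup.of 1) ^ (2 * (a * d + b * c))) := by
  have rel {r : FreeGroup (Fin 4)} (hr : r ∈ quotientCuspRels a b c d) :
      PresentedGroup.mk (quotientCuspRels a b c d) r = 1 :=
    PresentedGroup.one_of_mem hr
  refine conj_formulas_of_quotientCusp_relations
    (t := (PresentedGroup.of 3 : PresentedGroup (quotientCuspRels a b c d))) hdet ?_ ?_ ?_ ?_
  · exact eq_inv_of_mul_eq_one_left (rel (.inl rfl))
  · exact eq_inv_of_mul_eq_one_left (rel (.inr (.inl rfl)))
  · exact mul_inv_eq_one.mp (rel (.inr (.inr (.inl rfl))))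
  · exact mul_inv_eq_one.mp (rel (.inr (.inr (.inr rfl))))
end

section
/- Every element g of the group G can be written as g = S₁^j T^k S₃^l with 0 ≤ j ≤ 4b−1 and 0 ≤ k, l ≤ 1, and the exponents (j, k, l) in these ranges are uniquely determined by g. -/
/-- Units of diagonal matrices, as a homomorphism from tuples of units. -/
noncomputable def diagonalUnits : (Fin 4 → ℂˣ) →* (Matrix (Fin 4) (Fin 4) ℂ)ˣ :=
  (Units.map (Matrix.diagonalRingHom (Fin 4) ℂ : (Fin 4 → ℂ) →* Matrix (Fin 4) (Fin 4) ℂ)).comp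
    (MulEquiv.piUnits (M := fun _ : Fin 4 => ℂ)).symm.toMonoidHom

theorem coe_diagonalUnits (v : Fin 4 → ℂˣ) :
    (diagonalUnits v : Matrix (Fin 4) (Fin 4) ℂ) = Matrix.diagonal fun i => (v i : ℂ) := rfl

theorem diagonalUnits_injective : Function.Injective diagonalUnits := by
  intro v w h
  have h' := congrArg Units.val h
  rw [coe_diagonalUnits, coe_diagonalUnits] at h'
  funext i
  exact Units.ext (congrFun (Matrix.diagonal_injective h') i)

/-- In a commutative group, a normal form for the elements generated by `s₁`, `s₂`, `s₃`, `s₄`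
subject to power relations. -/
theorem exists_normal_form {A : Type*} [CommGroup A] {s₁ s₂ s₃ s₄ : A} {n p q p' q' : ℕ}
    (hn : 0 < n) (h₁ : s₁ ^ n = 1) (ht : (s₁ * s₂⁻¹) ^ 2 = 1)
    (h₃ : s₃ ^ 2 = s₁ ^ p * (s₁ * s₂⁻¹) ^ q)
    (h₄ : s₄ = s₃ * s₁ ^ p' * (s₁ * s₂⁻¹) ^ q')
    {g : A} (hg : g ∈ Subgroup.closure {s₁, s₂, s₃, s₄}) :
    ∃ t : Fin n × Fin 2 × Fin 2,
      g = s₁ ^ (t.1 : ℕ) * (s₁ * s₂⁻¹) ^ (t.2.1 : ℕ) * s₃ ^ (t.2.2 : ℕ) := by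
  have hs₂ : s₂ = s₁ * (s₁ * s₂⁻¹)⁻¹ := by simp
  generalize s₁ * s₂⁻¹ = t at *
  have key : ∃ j k l : ℤ, g = s₁ ^ j * t ^ k * s₃ ^ l := by
    induction hg using Subgroup.closure_induction with
    | mem x hx =>
      rcases hx with rfl | rfl | rfl | rfl
      · exact ⟨1, 0, 0, by simp⟩
      · exact ⟨1, -1, 0, by simpa using hs₂⟩
      · exact ⟨0, 0, 1, by simp⟩
      · exact ⟨p', q', 1, by rw [h₄]; simp only [zpow_natCast, zpow_one]; rw [mul_assoc, mul_comm]⟩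
    | one => exact ⟨0, 0, 0, by simp⟩
    | mul x y _ _ hx hy =>
      obtain ⟨j, k, l, rfl⟩ := hx
      obtain ⟨j', k', l', rfl⟩ := hy
      refine ⟨j + j', k + k', l + l', ?_⟩
      simp only [zpow_add]
      rw [mul_mul_mul_comm, mul_mul_mul_comm (s₁ ^ j)]
    | inv x _ hx =>
      obtain ⟨j, k, l, rfl⟩ := hx
      exact ⟨-j, -k, -l, by simp only [zpow_neg, mul_inv]⟩
  have red : ∀ (x : A) (m : ℕ), 0 < m → x ^ m = 1 → ∀ j : ℤ, ∃ i : Fin m, x ^ j = x ^ (i : ℕ) := by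
    intro x m hm hx j
    have hm' : (0 : ℤ) < m := by exact_mod_cast hm
    have h0 := Int.emod_nonneg j hm'.ne'
    have h1 := Int.emod_lt_of_pos j hm'
    refine ⟨⟨(j % m).toNat, by omega⟩, ?_⟩
    rw [← zpow_natCast, Int.toNat_of_nonneg h0]
    conv_lhs => rw [← Int.emod_add_mul_ediv j m, zpow_add, zpow_mul, zpow_natCast, hx, one_zpow,
      mul_one]
  obtain ⟨j, k, l, rfl⟩ := key
  have h0 := Int.emod_nonneg l (two_ne_zero)
  have h1 := Int.emod_lt_of_pos l (two_pos)
  obtain ⟨i, hi⟩ := red s₁ n hn h₁ (j + p * (l / 2))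
  obtain ⟨i', hi'⟩ := red t 2 two_pos ht (k + q * (l / 2))
  refine ⟨⟨i, i', ⟨(l % 2).toNat, by omega⟩⟩, ?_⟩
  have hl : s₃ ^ l = s₁ ^ (p * (l / 2)) * t ^ (q * (l / 2)) * s₃ ^ (l % 2) := by
    conv_lhs => rw [← Int.emod_add_mul_ediv l 2, zpow_add, zpow_mul]
    rw [show s₃ ^ (2 : ℤ) = s₃ ^ 2 from zpow_natCast s₃ 2, h₃, mul_zpow, mul_comm]
    simp only [zpow_mul, zpow_natCast]
  simp only
  rw [← hi, ← hi', ← zpow_natCast s₃, Int.toNat_of_nonneg h0, hl, zpow_add, zpow_add, ← mul_assoc,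
    mul_mul_mul_comm]

theorem neg_one_pow_fin_two_injective :
    Function.Injective fun m : Fin 2 => (-1 : ℂˣ) ^ (m : ℕ) := by
  intro m m' h
  fin_cases m <;> fin_cases m'
  · rfl
  · replace h := h.symm
    simp at h
  · simp at h
  · rfl

theorem stmt_14 (a b c d : ℕ) (ha : 0 < a) (hb : 0 < b) (hc : 0 < c) (hd : 0 < d)
    (hdet : a * d = b * c + 1) (ω : ℂ) (hω : IsPrimitiveRoot ω (4 * b))
    (S₁ S₂ S₃ S₄ : (Matrix (Fin 4) (Fin 4) ℂ)ˣ)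
    (hS₁ : (S₁ : Matrix (Fin 4) (Fin 4) ℂ) = Matrix.diagonal ![-ω ^ a, ω ^ a, ω, ω])
    (hS₂ : (S₂ : Matrix (Fin 4) (Fin 4) ℂ) = Matrix.diagonal ![ω ^ a, -ω ^ a, ω, ω])
    (hS₃ : (S₃ : Matrix (Fin 4) (Fin 4) ℂ) = Matrix.diagonal ![ω, ω, -ω ^ d, ω ^ d])
    (hS₄ : (S₄ : Matrix (Fin 4) (Fin 4) ℂ) = Matrix.diagonal ![ω, ω, ω ^ d, -ω ^ d]) :
    ∀ g ∈ Subgroup.closure {S₁, S₂, S₃, S₄},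
      ∃! t : Fin (4 * b) × Fin 2 × Fin 2,
        g = S₁ ^ (t.1 : ℕ) * (S₁ * S₂⁻¹) ^ (t.2.1 : ℕ) * S₃ ^ (t.2.2 : ℕ) := by
  have hn : 0 < 4 * b := by omega
  obtain ⟨w, rfl⟩ : ∃ w : ℂˣ, (w : ℂ) = ω := ⟨Units.mk0 ω (hω.ne_zero hn.ne'), rfl⟩
  have hw : IsPrimitiveRoot w (4 * b) := IsPrimitiveRoot.coe_units_iff.mp hω
  have hw2 : w ^ (2 * b) = -1 := by
    have h : IsPrimitiveRoot ((w : ℂ) ^ (2 * b)) 2 := hω.pow hn (by ring)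
    exact Units.ext (by simpa using h.eq_neg_one_of_two_right)
  obtain ⟨s₁, hs₁⟩ : ∃ s, s = ![-w ^ a, w ^ a, w, w] := ⟨_, rfl⟩
  obtain ⟨s₂, hs₂⟩ : ∃ s, s = ![w ^ a, -w ^ a, w, w] := ⟨_, rfl⟩
  obtain ⟨s₃, hs₃⟩ : ∃ s, s = ![w, w, -w ^ d, w ^ d] := ⟨_, rfl⟩
  obtain ⟨s₄, hs₄⟩ : ∃ s, s = ![w, w, w ^ d, -w ^ d] := ⟨_, rfl⟩
  obtain rfl : S₁ = diagonalUnits s₁ := Units.ext <| by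
    rw [hS₁, coe_diagonalUnits, hs₁]; congr 1; funext i; fin_cases i <;> simp
  obtain rfl : S₂ = diagonalUnits s₂ := Units.ext <| by
    rw [hS₂, coe_diagonalUnits, hs₂]; congr 1; funext i; fin_cases i <;> simp
  obtain rfl : S₃ = diagonalUnits s₃ := Units.ext <| by
    rw [hS₃, coe_diagonalUnits, hs₃]; congr 1; funext i; fin_cases i <;> simp
  obtain rfl : S₄ = diagonalUnits s₄ := Units.ext <| by
    rw [hS₄, coe_diagonalUnits, hs₄]; congr 1; funext i; fin_cases i <;> simp
  have ht : s₁ * s₂⁻¹ = ![-1, -1, 1, 1] := by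
    rw [mul_inv_eq_iff_eq_mul, hs₁, hs₂]; funext i; fin_cases i <;> simp
  have h₁ : s₁ ^ (4 * b) = 1 := by
    have he : Even (4 * b) := ⟨2 * b, by ring⟩
    rw [hs₁]
    funext i
    fin_cases i <;> simp [he.neg_pow, hw.pow_eq_one, ← pow_mul, mul_comm a, pow_mul w (4 * b) a]
  have ht2 : (s₁ * s₂⁻¹) ^ 2 = 1 := by
    rw [ht]; funext i; fin_cases i <;> simp
  have hwad : w ^ (a * (2 * d)) = w ^ 2 * (-1) ^ c := by
    rw [show a * (2 * d) = 2 * (a * d) by ring, hdet,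
      show 2 * (b * c + 1) = 2 + 2 * b * c by ring, pow_add, pow_mul, hw2]
  have hcc (m : ℕ) : (-1 : ℂˣ) ^ m * (-1) ^ m = 1 := by
    rw [← mul_pow]; simp
  have h₃ : s₃ ^ 2 = s₁ ^ (2 * d) * (s₁ * s₂⁻¹) ^ c := by
    have he : Even (2 * d) := ⟨d, by ring⟩
    rw [ht, hs₁, hs₃]
    funext i
    fin_cases i <;> simp [he.neg_pow, ← pow_mul, hwad, mul_assoc, hcc, mul_comm d]
  have hwa : (w ^ a) ^ (2 * b) = (-1) ^ a := by rw [pow_right_comm, hw2]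
  have h₄ : s₄ = s₃ * s₁ ^ (2 * b) * (s₁ * s₂⁻¹) ^ a := by
    have he : Even (2 * b) := ⟨b, by ring⟩
    rw [ht, hs₁, hs₃, hs₄]
    funext i
    fin_cases i <;> simp [he.neg_pow, hwa, hw2, mul_assoc, hcc]
  intro g hg
  have himage : ({diagonalUnits s₁, diagonalUnits s₂, diagonalUnits s₃, diagonalUnits s₄} :
      Set (Matrix (Fin 4) (Fin 4) ℂ)ˣ) = diagonalUnits '' {s₁, s₂, s₃, s₄} := by
    simp only [Set.image_insert_eq, Set.image_singleton]
  rw [himage, ← MonoidHom.map_closure] at hg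
  obtain ⟨x, hx, rfl⟩ := hg
  simp only [← map_inv, ← map_mul, ← map_pow, diagonalUnits_injective.eq_iff]
  obtain ⟨t, rfl⟩ := exists_normal_form hn h₁ ht2 h₃ h₄ hx
  refine ⟨t, rfl, ?_⟩
  rintro ⟨j', k', l'⟩ h
  obtain ⟨j, k, l⟩ := t
  rw [ht, hs₁, hs₃] at h
  have e1 := congrFun h 1
  have e2 := congrFun h 2
  have e3 := congrFun h 3
  simp at e1 e2 e3
  obtain rfl : l = l' := by
    apply neg_one_pow_fin_two_injective
    beta_reduce
    rw [neg_pow (w ^ d), neg_pow (w ^ d) (l' : ℕ), mul_left_comm, e3, mul_left_comm] at e2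
    exact mul_right_cancel (mul_left_cancel e2)
  obtain rfl : j = j' := Fin.ext (hw.pow_inj j.2 j'.2 (mul_right_cancel e3))
  obtain rfl : k = k' := neg_one_pow_fin_two_injective (mul_left_cancel (mul_right_cancel e1))
  rfl
end

section
/- The group G is a finite abelian group of order 16b. -/
/-- In a commutative group, elements `s`, `u`, `t` with `s ^ n = 1`, `u ^ 2 = t ^ c`, `t ^ 2 = 1`
and no other relations generate a subgroup of order `4 * n`. -/
theorem card_closure_of_relations {K : Type*} [CommGroup K] {s u t : K} {n c : ℕ} (hn : 0 < n)
    (hs : s ^ n = 1) (hu : u ^ 2 = t ^ c) (ht : t ^ 2 = 1) (ht1 : t ≠ 1)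
    (hind : ∀ i j k : ℤ, s ^ i * u ^ j * t ^ k = 1 → (n : ℤ) ∣ i ∧ (2 : ℤ) ∣ j) :
    Nat.card (Subgroup.closure {s, u, t}) = 4 * n := by
  have hsm : s ∈ Subgroup.closure {s, u, t} := Subgroup.subset_closure (by simp)
  have hum : u ∈ Subgroup.closure {s, u, t} := Subgroup.subset_closure (by simp)
  have htm : t ∈ Subgroup.closure {s, u, t} := Subgroup.subset_closure (by simp)
  let F : Fin n × Fin 2 × Fin 2 → Subgroup.closure {s, u, t} := fun p =>
    ⟨s ^ (p.1 : ℕ) * u ^ (p.2.1 : ℕ) * t ^ (p.2.2 : ℕ),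
      mul_mem (mul_mem (pow_mem hsm _) (pow_mem hum _)) (pow_mem htm _)⟩
  have hinj : Function.Injective F := by
    rintro ⟨i, j, k⟩ ⟨i', j', k'⟩ h
    have h : s ^ (i : ℕ) * u ^ (j : ℕ) * t ^ (k : ℕ) =
      s ^ (i' : ℕ) * u ^ (j' : ℕ) * t ^ (k' : ℕ) := congrArg Subtype.val h
    obtain ⟨h1, h2⟩ := hind ((i : ℤ) - i') ((j : ℤ) - j') ((k : ℤ) - k') (by
      simp only [zpow_sub, zpow_natCast]
      calc _ = (s ^ (i : ℕ) * u ^ (j : ℕ) * t ^ (k : ℕ)) *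
            (s ^ (i' : ℕ) * u ^ (j' : ℕ) * t ^ (k' : ℕ))⁻¹ := by
              simp only [mul_inv]; ac_rfl
        _ = 1 := by rw [h, mul_inv_cancel])
    have hi : i = i' := by
      have := Int.eq_zero_of_abs_lt_dvd h1 (by rw [abs_lt]; omega)
      omega
    have hj : j = j' := by omega
    subst hi hj
    have hk : k = k' := by
      have h := mul_left_cancel h
      fin_cases k <;> fin_cases k'
      · rfl
      · exact absurd (by simpa using h.symm) ht1
      · exact absurd (by simpa using h) ht1
      · rfl
    rw [hk]
  have hsurj : Function.Surjective F := by
    rintro ⟨x, hx⟩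
    obtain ⟨i, j, k, rfl⟩ : ∃ i j k : ℤ, x = s ^ i * u ^ j * t ^ k := by
      induction hx using Subgroup.closure_induction with
      | mem x hx =>
        rcases hx with rfl | rfl | rfl
        · exact ⟨1, 0, 0, by simp⟩
        · exact ⟨0, 1, 0, by simp⟩
        · exact ⟨0, 0, 1, by simp⟩
      | one => exact ⟨0, 0, 0, by simp⟩
      | mul x y _ _ hx hy =>
        obtain ⟨i, j, k, rfl⟩ := hx
        obtain ⟨i', j', k', rfl⟩ := hy
        exact ⟨i + i', j + j', k + k', by simp only [zpow_add]; ac_rfl⟩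
      | inv x _ hx =>
        obtain ⟨i, j, k, rfl⟩ := hx
        exact ⟨-i, -j, -k, by simp only [zpow_neg, mul_inv]⟩
    have red (y : K) (m : ℕ) (hm : 0 < m) (e : ℤ) :
        ∃ r : Fin m, ∃ q : ℤ, y ^ e = y ^ (r : ℕ) * (y ^ m) ^ q := by
      have hm' : (0 : ℤ) < m := by exact_mod_cast hm
      have h0 := Int.emod_nonneg e hm'.ne'
      have h1 := Int.emod_lt_of_pos e hm'
      refine ⟨⟨(e % m).toNat, by omega⟩, e / m, ?_⟩
      rw [← zpow_natCast, ← zpow_natCast y m, ← zpow_mul, ← zpow_add]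
      congr 1
      rw [Int.toNat_of_nonneg h0, Int.emod_add_mul_ediv]
    obtain ⟨i', _, hi⟩ := red s n hn i
    obtain ⟨j', q, hj⟩ := red u 2 two_pos j
    obtain ⟨k', _, hk⟩ := red t 2 two_pos (c * q + k)
    refine ⟨(i', j', k'), Subtype.ext ?_⟩
    simp only [hs, ht, one_zpow, mul_one] at hi hk
    simp only [F, hi, hj, hu, ← hk, zpow_add, zpow_mul, zpow_natCast, mul_assoc]
  rw [← Nat.card_congr (Equiv.ofBijective F ⟨hinj, hsurj⟩)]
  simp only [Nat.card_eq_fintype_card, Fintype.card_prod, Fintype.card_fin]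
  ring

theorem units_neg_one_zpow_eq_one {j : ℤ} (h : (-1 : ℂˣ) ^ j = 1) : (2 : ℤ) ∣ j := by
  rcases Int.even_or_odd j with hj | hj
  · exact hj.two_dvd
  · rw [hj.neg_one_zpow] at h
    have := congrArg Units.val h
    norm_num at this

/-- The order of the group of diagonal vectors generated by the diagonals of the four matrices. -/
theorem card_closure_diagonals (a b c d : ℕ) (hb : 0 < b) (hdet : a * d = b * c + 1) (w : ℂˣ)
    (hw : IsPrimitiveRoot w (4 * b)) :
    Nat.card (Subgroup.closure ({![-w ^ a, w ^ a, w, w], ![w ^ a, -w ^ a, w, w],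
      ![w, w, -w ^ d, w ^ d], ![w, w, w ^ d, -w ^ d]} : Set (Fin 4 → ℂˣ))) = 16 * b := by
  have hw4 : w ^ (4 * b) = 1 := hw.pow_eq_one
  have hw2 : w ^ (2 * b) = -1 := by
    have h : IsPrimitiveRoot (w ^ (2 * b)) 2 := hw.pow (by omega) (by ring)
    have h' : IsPrimitiveRoot ((w ^ (2 * b) : ℂˣ) : ℂ) 2 := IsPrimitiveRoot.coe_units_iff.2 h
    exact Units.ext h'.eq_neg_one_of_two_right
  have hwad : w ^ (a * d) = w ^ (b * c) * w := by rw [hdet, pow_succ]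
  have hwbc : (w ^ (b * c)) ^ 2 = (-1) ^ c := by
    rw [← hw2, ← pow_mul, ← pow_mul]
    congr 1
    ring
  have hsq (z : ℂˣ) : (-z) ^ (2 * b) = z ^ (2 * b) := (even_two_mul b).neg_pow z
  set s : Fin 4 → ℂˣ := ![-w ^ a, w ^ a, w, w]
  set t : Fin 4 → ℂˣ := ![-1, -1, 1, 1]
  set u : Fin 4 → ℂˣ := ![(-1) ^ d * (w ^ (b * c))⁻¹, (w ^ (b * c))⁻¹, -1, 1]
  have e2 : (![w ^ a, -w ^ a, w, w] : Fin 4 → ℂˣ) = s * t := by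
    ext i; fin_cases i <;> simp [s, t]
  have e3 : (![w, w, -w ^ d, w ^ d] : Fin 4 → ℂˣ) = u * s ^ d := by
    have h1 : w = (-1) ^ d * (w ^ (b * c))⁻¹ * (-w ^ a) ^ d := by
      rw [neg_pow (w ^ a), ← pow_mul, hwad]
      have : ((-1 : ℂˣ) ^ d) * (-1) ^ d = 1 := by rw [← mul_pow]; simp
      calc w = ((-1 : ℂˣ) ^ d * (-1) ^ d) * ((w ^ (b * c))⁻¹ * w ^ (b * c)) * w := by
            rw [this]; simp
        _ = _ := by ac_rfl
    have h2 : w = (w ^ (b * c))⁻¹ * (w ^ a) ^ d := by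
      rw [← pow_mul, hwad]; simp
    funext i
    fin_cases i
    · exact h1
    · exact h2
    · simp [s, u]
    · simp [s, u]
  have e4 : (![w, w, w ^ d, -w ^ d] : Fin 4 → ℂˣ) = u * s ^ d * (s ^ (2 * b) * t ^ a) := by
    have h1 : (w ^ a) ^ (2 * b) * (-1) ^ a = 1 := by
      rw [← pow_mul, mul_comm, mul_comm a, pow_mul, hw2, ← mul_pow]; simp
    rw [← e3]
    funext i
    fin_cases i <;> simp [s, t, hsq, h1, hw2]
  have hcl : Subgroup.closure ({s, ![w ^ a, -w ^ a, w, w], ![w, w, -w ^ d, w ^ d],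
      ![w, w, w ^ d, -w ^ d]} : Set (Fin 4 → ℂˣ)) = Subgroup.closure {s, u, t} := by
    rw [e2, e3, e4]
    apply le_antisymm <;> rw [Subgroup.closure_le]
    · have hsm : s ∈ Subgroup.closure {s, u, t} := Subgroup.subset_closure (by simp)
      have hum : u ∈ Subgroup.closure {s, u, t} := Subgroup.subset_closure (by simp)
      have htm : t ∈ Subgroup.closure {s, u, t} := Subgroup.subset_closure (by simp)
      have h3 := mul_mem hum (pow_mem hsm d)
      rintro x (rfl | rfl | rfl | rfl)
      · exact hsm
      · exact mul_mem hsm htm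
      · exact h3
      · exact mul_mem h3 (mul_mem (pow_mem hsm _) (pow_mem htm _))
    · set H := Subgroup.closure {s, s * t, u * s ^ d, u * s ^ d * (s ^ (2 * b) * t ^ a)}
      have hsm : s ∈ H := Subgroup.subset_closure (by simp)
      have h2 : s * t ∈ H := Subgroup.subset_closure (by simp)
      have h3 : u * s ^ d ∈ H := Subgroup.subset_closure (by simp)
      rintro x (rfl | rfl | rfl)
      · exact hsm
      · exact (Subgroup.mul_mem_cancel_right H (pow_mem hsm d)).1 h3
      · exact (Subgroup.mul_mem_cancel_left H hsm).1 h2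
  rw [hcl, card_closure_of_relations (n := 4 * b) (c := c) (by omega)]
  · ring
  · funext i
    fin_cases i
    · change (-w ^ a) ^ (4 * b) = 1
      rw [Even.neg_pow ⟨2 * b, by ring⟩, pow_right_comm, hw4, one_pow]
    · change (w ^ a) ^ (4 * b) = 1
      rw [pow_right_comm, hw4, one_pow]
    · exact hw4
    · exact hw4
  · have h1 : ((-1 : ℂˣ) ^ c)⁻¹ = (-1) ^ c := by rw [← inv_pow]; simp
    have h2 : ((-1 : ℂˣ) ^ d) ^ 2 = 1 := by rw [pow_right_comm]; simp
    funext i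
    fin_cases i <;> simp [u, t, mul_pow, hwbc, h1, h2]
  · funext i
    fin_cases i <;> simp [t]
  · intro h
    have := congrArg Units.val (congrFun h 0)
    norm_num [t] at this
  · intro i j k h
    have h3 : w ^ i = 1 := by simpa [s, u, t] using congrFun h 3
    have h2 : w ^ i * (-1) ^ j = 1 := by simpa [s, u, t] using congrFun h 2
    rw [h3, one_mul] at h2
    exact ⟨(hw.zpow_eq_one_iff_dvd i).1 h3, units_neg_one_zpow_eq_one h2⟩


theorem stmt_15 (a b c d : ℕ) (ha : 0 < a) (hb : 0 < b) (hc : 0 < c) (hd : 0 < d)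
    (hdet : a * d = b * c + 1) (ω : ℂ) (hω : IsPrimitiveRoot ω (4 * b))
    (S₁ S₂ S₃ S₄ : (Matrix (Fin 4) (Fin 4) ℂ)ˣ)
    (hS₁ : (S₁ : Matrix (Fin 4) (Fin 4) ℂ) = Matrix.diagonal ![-ω ^ a, ω ^ a, ω, ω])
    (hS₂ : (S₂ : Matrix (Fin 4) (Fin 4) ℂ) = Matrix.diagonal ![ω ^ a, -ω ^ a, ω, ω])
    (hS₃ : (S₃ : Matrix (Fin 4) (Fin 4) ℂ) = Matrix.diagonal ![ω, ω, -ω ^ d, ω ^ d])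
    (hS₄ : (S₄ : Matrix (Fin 4) (Fin 4) ℂ) = Matrix.diagonal ![ω, ω, ω ^ d, -ω ^ d]) :
    (∀ x ∈ Subgroup.closure {S₁, S₂, S₃, S₄}, ∀ y ∈ Subgroup.closure {S₁, S₂, S₃, S₄},
        x * y = y * x) ∧
      Finite (Subgroup.closure {S₁, S₂, S₃, S₄} : Subgroup (Matrix (Fin 4) (Fin 4) ℂ)ˣ) ∧
      Nat.card (Subgroup.closure {S₁, S₂, S₃, S₄} : Subgroup (Matrix (Fin 4) (Fin 4) ℂ)ˣ) =
        16 * b := by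
  have hn : 4 * b ≠ 0 := by omega
  obtain ⟨w, rfl⟩ : ∃ w : ℂˣ, (w : ℂ) = ω := hω.isUnit hn
  have hw : IsPrimitiveRoot w (4 * b) := IsPrimitiveRoot.coe_units_iff.1 hω
  let D : (Fin 4 → ℂˣ) →* (Matrix (Fin 4) (Fin 4) ℂ)ˣ :=
    (Units.map (Matrix.diagonalRingHom (Fin 4) ℂ).toMonoidHom).comp
      (MulEquiv.piUnits (M := fun _ : Fin 4 => ℂ)).symm.toMonoidHom
  have hD (v : Fin 4 → ℂˣ) :
      (D v : Matrix (Fin 4) (Fin 4) ℂ) = Matrix.diagonal fun i => (v i : ℂ) := rfl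
  have hDinj : Function.Injective D := by
    intro v v' h
    have h := congrArg Units.val h
    rw [hD, hD] at h
    funext i
    exact Units.ext (congrFun (Matrix.diagonal_injective h) i)
  have hS (S : (Matrix (Fin 4) (Fin 4) ℂ)ˣ) (v : Fin 4 → ℂˣ) (x : Fin 4 → ℂ)
      (h : (S : Matrix (Fin 4) (Fin 4) ℂ) = Matrix.diagonal x) (hx : ∀ i, x i = v i) :
      S = D v := by
    apply Units.ext
    rw [h, hD, funext hx]
  have h1 := hS S₁ ![-w ^ a, w ^ a, w, w] _ hS₁ (by intro i; fin_cases i <;> simp)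
  have h2 := hS S₂ ![w ^ a, -w ^ a, w, w] _ hS₂ (by intro i; fin_cases i <;> simp)
  have h3 := hS S₃ ![w, w, -w ^ d, w ^ d] _ hS₃ (by intro i; fin_cases i <;> simp)
  have h4 := hS S₄ ![w, w, w ^ d, -w ^ d] _ hS₄ (by intro i; fin_cases i <;> simp)
  have hmap : Subgroup.closure {S₁, S₂, S₃, S₄} =
      (Subgroup.closure ({![-w ^ a, w ^ a, w, w], ![w ^ a, -w ^ a, w, w],
        ![w, w, -w ^ d, w ^ d], ![w, w, w ^ d, -w ^ d]} : Set (Fin 4 → ℂˣ))).map D := by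
    rw [MonoidHom.map_closure, h1, h2, h3, h4]
    simp only [Set.image_insert_eq, Set.image_singleton]
  have hcard : Nat.card (Subgroup.closure {S₁, S₂, S₃, S₄} :
      Subgroup (Matrix (Fin 4) (Fin 4) ℂ)ˣ) = 16 * b := by
    rw [hmap, Subgroup.card_map_of_injective hDinj]
    exact card_closure_diagonals a b c d hb hdet w hw
  refine ⟨?_, Nat.finite_of_card_ne_zero (by omega), hcard⟩
  rw [hmap]
  rintro _ ⟨x, _, rfl⟩ _ ⟨y, _, rfl⟩
  rw [← map_mul, ← map_mul, mul_comm]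
end

section
/- Suppose c is odd. Then (S₁^d S₃^{−1})² = T, the group G is isomorphic to the product of cyclic groups C_{4b} × C₄ (with the two factors generated by S₁ and S₁^d S₃^{−1}), and the only non-identity elements of G having at least two diagonal entries equal to 1 are T = diag(−1,−1,1,1) and −T = diag(1,1,−1,−1). -/
/-- A pair of commuting elements `x`, `y` of a group with `x ^ M = 1` and `y ^ N = 1` that satisfy
no further relations generates a copy of `C_M × C_N`. -/
theorem exists_injective_hom_zmod_prod {G : Type*} [Group G] {x y : G} (hxy : Commute x y)
    {M N : ℕ} (hx : x ^ M = 1) (hy : y ^ N = 1)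
    (hind : ∀ m n : ℤ, x ^ m * y ^ n = 1 → (M : ℤ) ∣ m ∧ (N : ℤ) ∣ n) :
    ∃ f : Multiplicative (ZMod M) × Multiplicative (ZMod N) →* G, Function.Injective f ∧
      ∀ m n : ℤ, f (Multiplicative.ofAdd (m : ZMod M), Multiplicative.ofAdd (n : ZMod N)) =
        x ^ m * y ^ n := by
  let toHom (z : G) (K : ℕ) (hz : z ^ K = 1) : Multiplicative (ZMod K) →* G :=
    AddMonoidHom.toMultiplicativeLeft
      (ZMod.lift K ⟨zmultiplesHom (Additive G) (Additive.ofMul z), by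
        simp [← ofMul_pow, hz]⟩)
  have toHom_apply (z : G) (K : ℕ) (hz : z ^ K = 1) (m : ℤ) :
      toHom z K hz (Multiplicative.ofAdd (m : ZMod K)) = z ^ m := by
    simp [toHom]
  have surj (K : ℕ) (u : Multiplicative (ZMod K)) :
      ∃ m : ℤ, Multiplicative.ofAdd (m : ZMod K) = u :=
    ZMod.intCast_surjective u
  have comm (u : Multiplicative (ZMod M)) (v : Multiplicative (ZMod N)) :
      Commute (toHom x M hx u) (toHom y N hy v) := by
    obtain ⟨m, rfl⟩ := surj M u
    obtain ⟨n, rfl⟩ := surj N v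
    rw [toHom_apply x M hx, toHom_apply y N hy]
    exact hxy.zpow_zpow m n
  have apply_eq (m n : ℤ) : (toHom x M hx).noncommCoprod (toHom y N hy) comm
      (Multiplicative.ofAdd (m : ZMod M), Multiplicative.ofAdd (n : ZMod N)) =
        x ^ m * y ^ n := by
    rw [MonoidHom.noncommCoprod_apply, toHom_apply x M hx, toHom_apply y N hy]
  refine ⟨(toHom x M hx).noncommCoprod (toHom y N hy) comm, ?_, apply_eq⟩
  rw [injective_iff_map_eq_one]
  rintro ⟨u, v⟩ huv
  obtain ⟨m, rfl⟩ := surj M u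
  obtain ⟨n, rfl⟩ := surj N v
  rw [apply_eq] at huv
  obtain ⟨hm, hn⟩ := hind m n huv
  rw [(ZMod.intCast_zmod_eq_zero_iff_dvd m M).2 hm, (ZMod.intCast_zmod_eq_zero_iff_dvd n N).2 hn]
  rfl

section DiagPow

variable {ι R : Type*} [Fintype ι] [DecidableEq ι] [CommRing R]

/-- The invertible diagonal matrix whose `k`-th diagonal entry is `w ^ e k`. -/
def diagPow (w : Rˣ) (e : ι → ℤ) : (Matrix ι ι R)ˣ :=
  Units.map (Matrix.diagonalRingHom ι R).toMonoidHom
    (MulEquiv.piUnits.symm fun k => w ^ e k)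

theorem coe_diagPow (w : Rˣ) (e : ι → ℤ) :
    (diagPow w e : Matrix ι ι R) = Matrix.diagonal fun k => ((w ^ e k : Rˣ) : R) :=
  rfl

theorem diagPow_add (w : Rˣ) (e f : ι → ℤ) :
    diagPow w (e + f) = diagPow w e * diagPow w f := by
  ext1
  simp [coe_diagPow, zpow_add]

theorem diagPow_zsmul (w : Rˣ) (e : ι → ℤ) (m : ℤ) :
    diagPow w (m • e) = diagPow w e ^ m := by
  let f : Multiplicative (ι → ℤ) →* (Matrix ι ι R)ˣ :=
    MonoidHom.mk' (fun v => diagPow w v.toAdd) fun u v => diagPow_add w u.toAdd v.toAdd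
  exact map_zpow f (Multiplicative.ofAdd e) m

theorem diagPow_commute (w : Rˣ) (e f : ι → ℤ) : Commute (diagPow w e) (diagPow w f) := by
  rw [Commute, SemiconjBy, ← diagPow_add, ← diagPow_add, add_comm]

theorem diagPow_apply_self_eq_one_iff {w : Rˣ} {N : ℕ} (hw : IsPrimitiveRoot w N) (e : ι → ℤ)
    (k : ι) : (diagPow w e : Matrix ι ι R) k k = 1 ↔ (N : ℤ) ∣ e k := by
  rw [coe_diagPow, Matrix.diagonal_apply_eq, Units.val_eq_one, hw.zpow_eq_one_iff_dvd]

theorem diagPow_eq_one_iff {w : Rˣ} {N : ℕ} (hw : IsPrimitiveRoot w N) (e : ι → ℤ) :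
    diagPow w e = 1 ↔ ∀ k, (N : ℤ) ∣ e k := by
  rw [← Units.val_inj, coe_diagPow, Units.val_one, Matrix.diagonal_eq_one, funext_iff]
  simp [← hw.zpow_eq_one_iff_dvd]

theorem diagPow_eq_iff {w : Rˣ} {N : ℕ} (hw : IsPrimitiveRoot w N) (e f : ι → ℤ) :
    diagPow w e = diagPow w f ↔ ∀ k, (N : ℤ) ∣ e k - f k := by
  rw [← mul_inv_eq_one, ← zpow_neg_one, ← diagPow_zsmul, ← diagPow_add, diagPow_eq_one_iff hw]
  simp [sub_eq_add_neg]

end DiagPow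

theorem zpow_two_mul_eq_neg_one {b : ℕ} (hb : 0 < b) {w : ℂˣ} (hw : IsPrimitiveRoot w (4 * b)) :
    w ^ (2 * b : ℤ) = -1 := by
  have h : IsPrimitiveRoot ((w : ℂ) ^ (2 * b)) 2 :=
    (IsPrimitiveRoot.coe_units_iff.2 hw).pow (by positivity) (by ring)
  have h' : w ^ (2 * b) = -1 := Units.ext (by simpa using h.eq_neg_one_of_two_right)
  exact_mod_cast h'

/-- Exponents of the diagonal entries of `S₁ ^ m * (S₁ ^ d * S₃⁻¹) ^ n` with respect to `ω`. -/
def exponents (a b c d m n : ℤ) : Fin 4 → ℤ :=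
  ![a * m + b * c * n + 2 * b * (m + d * n), a * m + b * c * n, m + 2 * b * n, m]

section Exponents

variable {a b c d m n : ℤ}

theorem even_of_dvd_left_and_right (hb : 0 < b) (hc : Odd c)
    (hleft : 2 * b ∣ a * m + b * c * n) (hright : 4 * b ∣ m ∨ 4 * b ∣ m + 2 * b * n) :
    Even n ∧ 4 * b ∣ m := by
  obtain ⟨k, hk⟩ := hleft
  obtain ⟨l, hl⟩ : 2 * b ∣ m := by
    rcases hright with ⟨l, hl⟩ | ⟨l, hl⟩
    · exact ⟨2 * l, by linear_combination hl⟩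
    · exact ⟨2 * l - n, by linear_combination hl⟩
  have hcn : c * n = 2 * (k - a * l) :=
    mul_left_cancel₀ hb.ne' (by linear_combination hk - a * hl)
  have hn : Even n := by
    rcases Int.even_mul.1 (⟨k - a * l, by rw [hcn]; ring⟩ : Even (c * n)) with h | h
    · exact absurd h (Int.not_even_iff_odd.2 hc)
    · exact h
  refine ⟨hn, ?_⟩
  obtain ⟨r, rfl⟩ := hn
  rcases hright with h | ⟨l, hl⟩
  · exact h
  · exact ⟨l - r, by linear_combination hl⟩

theorem even_of_dvd_left (hb : 0 < b) (hdet : a * d = b * c + 1)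
    (h₀ : 4 * b ∣ a * m + b * c * n + 2 * b * (m + d * n))
    (h₁ : 4 * b ∣ a * m + b * c * n) : Even n ∧ 2 * b ∣ m := by
  have hpar : Even (m + d * n) := by
    obtain ⟨k, hk⟩ := (dvd_add_right h₁).1 h₀
    have : m + d * n = 2 * k :=
      mul_left_cancel₀ (mul_ne_zero two_ne_zero hb.ne') (by linear_combination hk)
    exact ⟨k, by rw [this]; ring⟩
  obtain ⟨q, hq⟩ := h₁
  obtain ⟨k, rfl⟩ : b ∣ m :=
    ⟨4 * d * q - c * (d * n) - c * m, by linear_combination d * hq - m * hdet⟩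
  have hsum : a * k + c * n = 4 * q := mul_left_cancel₀ hb.ne' (by linear_combination hq)
  obtain ⟨p, hp⟩ := hpar
  refine ⟨⟨a * p - 2 * b * q, by linear_combination a * hp - b * hsum - n * hdet⟩, ?_⟩
  exact ⟨2 * d * q - c * p, by linear_combination b * (d * hsum - c * hp - k * hdet)⟩

theorem even_and_dvd_of_exponents_dvd (hb : 0 < b) (hdet : a * d = b * c + 1) (hc : Odd c)
    {i j : Fin 4} (hij : i < j) (hi : 4 * b ∣ exponents a b c d m n i)
    (hj : 4 * b ∣ exponents a b c d m n j) :
    Even n ∧ (4 * b ∣ m ∨ 2 * b ∣ m ∧ 4 * b ∣ exponents a b c d m n 0 ∧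
      4 * b ∣ exponents a b c d m n 1) := by
  have h24 : 2 * b ∣ 4 * b := ⟨2, by ring⟩
  have hmixed (hleft : 2 * b ∣ a * m + b * c * n)
      (hright : 4 * b ∣ m ∨ 4 * b ∣ m + 2 * b * n) :
      Even n ∧ (4 * b ∣ m ∨ 2 * b ∣ m ∧ 4 * b ∣ exponents a b c d m n 0 ∧
        4 * b ∣ exponents a b c d m n 1) :=
    (even_of_dvd_left_and_right hb hc hleft hright).imp_right Or.inl
  have hfirst (h : 4 * b ∣ a * m + b * c * n + 2 * b * (m + d * n)) :
      2 * b ∣ a * m + b * c * n :=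
    (dvd_add_left (dvd_mul_right _ _)).1 (h24.trans h)
  fin_cases i <;> fin_cases j <;> first | exact absurd hij (by decide) | skip
  · obtain ⟨hn, hm⟩ := even_of_dvd_left hb hdet hi hj
    exact ⟨hn, Or.inr ⟨hm, hi, hj⟩⟩
  · exact hmixed (hfirst hi) (Or.inr hj)
  · exact hmixed (hfirst hi) (Or.inl hj)
  · exact hmixed (h24.trans hi) (Or.inr hj)
  · exact hmixed (h24.trans hi) (Or.inl hj)
  · refine ⟨?_, Or.inl hj⟩
    obtain ⟨k, hk⟩ := (dvd_add_right hj).1 hi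
    have : n = 2 * k :=
      mul_left_cancel₀ (mul_ne_zero two_ne_zero hb.ne') (by linear_combination hk)
    exact ⟨k, by rw [this]; ring⟩

/-- If two of the exponents vanish modulo `4 * b`, then modulo `4 * b` the exponents are those of
the identity, of `diag(-1, -1, 1, 1)` or of `diag(1, 1, -1, -1)`. -/
theorem exponents_modEq_of_dvd (hb : 0 < b) (hdet : a * d = b * c + 1) (hc : Odd c)
    {i j : Fin 4} (hij : i ≠ j) (hi : 4 * b ∣ exponents a b c d m n i)
    (hj : 4 * b ∣ exponents a b c d m n j) :
    (∀ k, 4 * b ∣ exponents a b c d m n k) ∨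
      (∀ k, 4 * b ∣ exponents a b c d m n k - ![2 * b, 2 * b, 0, 0] k) ∨
      (∀ k, 4 * b ∣ exponents a b c d m n k - ![0, 0, 2 * b, 2 * b] k) := by
  wlog h : i < j generalizing i j
  · exact this hij.symm hj hi (lt_of_le_of_ne (not_lt.1 h) hij.symm)
  obtain ⟨⟨r, rfl⟩, ⟨q, rfl⟩ | ⟨⟨l, rfl⟩, h₀, h₁⟩⟩ :=
    even_and_dvd_of_exponents_dvd hb hdet hc h hi hj
  · obtain ⟨s, rfl⟩ := hc
    obtain ⟨t, rfl | rfl⟩ := r.even_or_odd'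
    · left
      simp only [exponents, Fin.forall_fin_succ]
      refine ⟨⟨a * q + (2 * s + 1) * t + 2 * b * q + 2 * d * t, ?_⟩,
        ⟨a * q + (2 * s + 1) * t, ?_⟩, ⟨q + 2 * t, ?_⟩, ⟨q, ?_⟩, by simp⟩ <;> simp <;> ring
    · right; left
      simp only [exponents, Fin.forall_fin_succ]
      refine ⟨⟨a * q + (2 * s + 1) * t + s + 2 * b * q + d * (2 * t + 1), ?_⟩,
        ⟨a * q + (2 * s + 1) * t + s, ?_⟩, ⟨q + 2 * t + 1, ?_⟩, ⟨q, ?_⟩, by simp⟩ <;>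
        simp <;> ring
  · obtain ⟨t, rfl | rfl⟩ := l.even_or_odd'
    · left
      simp only [Fin.forall_fin_succ]
      refine ⟨h₀, h₁, ⟨t + r, ?_⟩, ⟨t, ?_⟩, by simp⟩ <;> simp [exponents] <;> ring
    · right; right
      simp only [Fin.forall_fin_succ]
      refine ⟨by simpa using h₀, by simpa using h₁, ⟨t + r, ?_⟩, ⟨t, ?_⟩, by simp⟩ <;>
        simp [exponents] <;> ring

theorem exponents_eq_zsmul_add_zsmul (a b c d m n : ℤ) :
    exponents a b c d m n = m • exponents a b c d 1 0 + n • exponents a b c d 0 1 := by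
  ext k
  fin_cases k <;> simp [exponents] <;> ring

end Exponents

theorem stmt_17 (a b c d : ℕ) (ha : 0 < a) (hb : 0 < b) (hc : 0 < c) (hd : 0 < d)
    (hdet : a * d = b * c + 1) (hcodd : Odd c)
    (ω : ℂ) (hω : IsPrimitiveRoot ω (4 * b))
    (S₁ S₂ S₃ S₄ : (Matrix (Fin 4) (Fin 4) ℂ)ˣ)
    (hS₁ : (S₁ : Matrix (Fin 4) (Fin 4) ℂ) = Matrix.diagonal ![-ω ^ a, ω ^ a, ω, ω])
    (hS₂ : (S₂ : Matrix (Fin 4) (Fin 4) ℂ) = Matrix.diagonal ![ω ^ a, -ω ^ a, ω, ω])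
    (hS₃ : (S₃ : Matrix (Fin 4) (Fin 4) ℂ) = Matrix.diagonal ![ω, ω, -ω ^ d, ω ^ d])
    (hS₄ : (S₄ : Matrix (Fin 4) (Fin 4) ℂ) = Matrix.diagonal ![ω, ω, ω ^ d, -ω ^ d]) :
    ((S₁ ^ d * S₃⁻¹) ^ 2 = S₁ * S₂⁻¹) ∧
    (∃ φ : Multiplicative (ZMod (4 * b)) × Multiplicative (ZMod 4) ≃*
        (Subgroup.closure {S₁, S₂, S₃, S₄} : Subgroup (Matrix (Fin 4) (Fin 4) ℂ)ˣ),
      ((φ (Multiplicative.ofAdd 1, 1) : (Matrix (Fin 4) (Fin 4) ℂ)ˣ) = S₁) ∧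
      ((φ (1, Multiplicative.ofAdd 1) : (Matrix (Fin 4) (Fin 4) ℂ)ˣ) = S₁ ^ d * S₃⁻¹)) ∧
    ({m : Matrix (Fin 4) (Fin 4) ℂ | ∃ g ∈ Subgroup.closure {S₁, S₂, S₃, S₄}, g ≠ 1 ∧
        (∃ i j : Fin 4, i ≠ j ∧ (g : Matrix (Fin 4) (Fin 4) ℂ) i i = 1 ∧
          (g : Matrix (Fin 4) (Fin 4) ℂ) j j = 1) ∧ (g : Matrix (Fin 4) (Fin 4) ℂ) = m} =
      {Matrix.diagonal ![-1, -1, 1, 1], Matrix.diagonal ![1, 1, -1, -1]}) := by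
  obtain ⟨w, rfl⟩ : IsUnit ω := hω.isUnit (by positivity)
  have hw : IsPrimitiveRoot w (4 * b) := IsPrimitiveRoot.coe_units_iff.1 hω
  have hbZ : (0 : ℤ) < b := by exact_mod_cast hb
  have hcZ : Odd (c : ℤ) := by exact_mod_cast hcodd
  have hdetZ : (a * d : ℤ) = b * c + 1 := by exact_mod_cast hdet
  have hN : ((4 * b : ℕ) : ℤ) = 4 * b := by push_cast; rfl
  have hneg : w ^ (2 * b : ℤ) = -1 := zpow_two_mul_eq_neg_one hb hw
  have eS₁ : S₁ = diagPow w (exponents a b c d 1 0) := by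
    ext1
    rw [hS₁, coe_diagPow]
    congr 1
    ext k
    fin_cases k <;> simp [exponents, zpow_add, hneg]
  have eS₂ : S₂ = diagPow w ![a, a + 2 * b, 1, 1] := by
    ext1
    rw [hS₂, coe_diagPow]
    congr 1
    ext k
    fin_cases k <;> simp [zpow_add, hneg]
  have eS₃ : S₃ = diagPow w ![1, 1, d + 2 * b, d] := by
    ext1
    rw [hS₃, coe_diagPow]
    congr 1
    ext k
    fin_cases k <;> simp [zpow_add, hneg]
  have eS₄ : S₄ = diagPow w ![1, 1, d, d + 2 * b] := by
    ext1
    rw [hS₄, coe_diagPow]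
    congr 1
    ext k
    fin_cases k <;> simp [zpow_add, hneg]
  have eR : S₁ ^ d * S₃⁻¹ = diagPow w (exponents a b c d 0 1) := by
    rw [eS₁, eS₃, ← zpow_natCast, ← zpow_neg_one, ← diagPow_zsmul, ← diagPow_zsmul,
      ← diagPow_add, diagPow_eq_iff hw, hN]
    simp only [Fin.forall_fin_succ]
    refine ⟨⟨0, ?_⟩, ⟨0, ?_⟩, ⟨-1, ?_⟩, ⟨0, ?_⟩, by simp⟩ <;> simp [exponents] <;>
      first | ring1 | linear_combination hdetZ
  have eT : diagPow w ![2 * b, 2 * b, 0, 0] = S₁ * S₂⁻¹ := by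
    rw [eS₁, eS₂, ← zpow_neg_one, ← diagPow_zsmul, ← diagPow_add, diagPow_eq_iff hw, hN]
    simp only [Fin.forall_fin_succ]
    refine ⟨⟨0, ?_⟩, ⟨1, ?_⟩, ⟨0, ?_⟩, ⟨0, ?_⟩, by simp⟩ <;> simp [exponents] <;> ring
  have eT' : diagPow w ![0, 0, 2 * b, 2 * b] = S₃ * S₄⁻¹ := by
    rw [eS₃, eS₄, ← zpow_neg_one, ← diagPow_zsmul, ← diagPow_add, diagPow_eq_iff hw, hN]
    simp only [Fin.forall_fin_succ]
    refine ⟨⟨0, ?_⟩, ⟨0, ?_⟩, ⟨0, ?_⟩, ⟨1, ?_⟩, by simp⟩ <;> simp <;> ring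
  have vT : (diagPow w ![2 * b, 2 * b, 0, 0] : Matrix (Fin 4) (Fin 4) ℂ) =
      Matrix.diagonal ![-1, -1, 1, 1] := by
    rw [coe_diagPow]
    congr 1
    ext k
    fin_cases k <;> simp [hneg]
  have vT' : (diagPow w ![0, 0, 2 * b, 2 * b] : Matrix (Fin 4) (Fin 4) ℂ) =
      Matrix.diagonal ![1, 1, -1, -1] := by
    rw [coe_diagPow]
    congr 1
    ext k
    fin_cases k <;> simp [hneg]
  have eWord (m n : ℤ) :
      diagPow w (exponents a b c d m n) = S₁ ^ m * (S₁ ^ d * S₃⁻¹) ^ n := by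
    rw [eR, eS₁, ← diagPow_zsmul, ← diagPow_zsmul, ← diagPow_add,
      ← exponents_eq_zsmul_add_zsmul]
  have hS₁R : Commute S₁ (S₁ ^ d * S₃⁻¹) := by
    rw [eR, eS₁]
    exact diagPow_commute w _ _
  obtain ⟨s, hs⟩ := hcZ
  have hS₁pow : S₁ ^ (4 * b) = 1 := by
    rw [← zpow_natCast, eS₁, ← diagPow_zsmul, diagPow_eq_one_iff hw]
    exact fun k => dvd_mul_right _ _
  have hR2 : (S₁ ^ d * S₃⁻¹) ^ 2 = S₁ * S₂⁻¹ := by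
    rw [← eT, eR, ← zpow_natCast, ← diagPow_zsmul, diagPow_eq_iff hw, hN]
    simp only [Fin.forall_fin_succ]
    refine ⟨⟨d + s, ?_⟩, ⟨s, ?_⟩, ⟨1, ?_⟩, ⟨0, ?_⟩, by simp⟩ <;> simp [exponents, hs] <;> ring
  have hRpow : (S₁ ^ d * S₃⁻¹) ^ 4 = 1 := by
    rw [pow_mul (S₁ ^ d * S₃⁻¹) 2 2, hR2, ← eT, ← zpow_natCast, ← diagPow_zsmul,
      diagPow_eq_one_iff hw, hN]
    simp only [Fin.forall_fin_succ]
    refine ⟨⟨1, ?_⟩, ⟨1, ?_⟩, ⟨0, ?_⟩, ⟨0, ?_⟩, by simp⟩ <;> simp <;> ring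
  have hind (m n : ℤ) (h : S₁ ^ m * (S₁ ^ d * S₃⁻¹) ^ n = 1) :
      ((4 * b : ℕ) : ℤ) ∣ m ∧ ((4 : ℕ) : ℤ) ∣ n := by
    rw [← eWord, diagPow_eq_one_iff hw] at h
    have hm : ((4 * b : ℕ) : ℤ) ∣ m := h 3
    refine ⟨hm, ?_⟩
    have hcn : (4 * b : ℤ) ∣ b * c * n := by
      rw [← hN]
      exact (dvd_add_right (hm.mul_left a)).1 (h 1)
    have hcn' : (4 : ℤ) ∣ c * n := by
      obtain ⟨q, hq⟩ := hcn
      exact ⟨q, mul_left_cancel₀ hbZ.ne' (by linear_combination hq)⟩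
    have hcop : IsCoprime (4 : ℤ) c := by
      have : IsCoprime (2 : ℤ) c := ⟨-s, 1, by rw [hs]; ring⟩
      exact this.pow_left (m := 2)
    exact hcop.dvd_of_dvd_mul_left hcn'
  have hS₂word : S₂ = S₁ ^ (1 : ℤ) * (S₁ ^ d * S₃⁻¹) ^ (-2 : ℤ) := by
    have hcomm : S₁ * S₂ = S₂ * S₁ := by
      rw [eS₁, eS₂]
      exact diagPow_commute w _ _
    rw [zpow_neg, show (2 : ℤ) = (2 : ℕ) from rfl, zpow_natCast, hR2, mul_inv_rev, inv_inv,
      zpow_one, ← mul_assoc, hcomm, mul_inv_cancel_right]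
  have hS₃word : S₃ = S₁ ^ (d : ℤ) * (S₁ ^ d * S₃⁻¹) ^ (-1 : ℤ) := by
    rw [← eWord, eS₃, diagPow_eq_iff hw, hN]
    simp only [Fin.forall_fin_succ]
    refine ⟨⟨0, ?_⟩, ⟨0, ?_⟩, ⟨1, ?_⟩, ⟨0, ?_⟩, by simp⟩ <;> simp [exponents] <;>
      first | ring1 | linear_combination -hdetZ
  have hS₄word : S₄ = S₁ ^ (d + 2 * b : ℤ) * (S₁ ^ d * S₃⁻¹) ^ (2 * a - 1 : ℤ) := by
    rw [← eWord, eS₄, diagPow_eq_iff hw, hN]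
    simp only [Fin.forall_fin_succ]
    refine ⟨⟨-(a * (s + 1) + b + a * d), ?_⟩, ⟨-(a * (s + 1)), ?_⟩, ⟨-a, ?_⟩, ⟨0, ?_⟩, by simp⟩ <;>
      simp [exponents] <;> first | ring1 | linear_combination -hdetZ - 2 * a * b * hs
  obtain ⟨f, hf, hfapply⟩ := exists_injective_hom_zmod_prod hS₁R hS₁pow hRpow hind
  have hmem (g : (Matrix (Fin 4) (Fin 4) ℂ)ˣ) :
      g ∈ f.range ↔ ∃ m n : ℤ, S₁ ^ m * (S₁ ^ d * S₃⁻¹) ^ n = g := by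
    constructor
    · rintro ⟨⟨u, v⟩, rfl⟩
      obtain ⟨m, hm⟩ := ZMod.intCast_surjective u.toAdd
      obtain ⟨n, hn⟩ := ZMod.intCast_surjective v.toAdd
      refine ⟨m, n, ?_⟩
      rw [← hfapply, hm, hn]
      rfl
    · rintro ⟨m, n, rfl⟩
      exact ⟨_, hfapply m n⟩
  have hrange : f.range = Subgroup.closure {S₁, S₂, S₃, S₄} := by
    apply le_antisymm
    · intro g hg
      obtain ⟨m, n, rfl⟩ := (hmem g).1 hg
      have h₁ : S₁ ∈ Subgroup.closure {S₁, S₂, S₃, S₄} := Subgroup.subset_closure (by simp)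
      have h₃ : S₃ ∈ Subgroup.closure {S₁, S₂, S₃, S₄} := Subgroup.subset_closure (by simp)
      exact mul_mem (zpow_mem h₁ m) (zpow_mem (mul_mem (pow_mem h₁ d) (inv_mem h₃)) n)
    · rw [Subgroup.closure_le]
      rintro g (rfl | rfl | rfl | rfl)
      · exact (hmem _).2 ⟨1, 0, by simp⟩
      · exact (hmem _).2 ⟨_, _, hS₂word.symm⟩
      · exact (hmem _).2 ⟨_, _, hS₃word.symm⟩
      · exact (hmem _).2 ⟨_, _, hS₄word.symm⟩
  refine ⟨hR2, ⟨(MonoidHom.ofInjective hf).trans (MulEquiv.subgroupCongr hrange), ?_, ?_⟩, ?_⟩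
  · have h := hfapply 1 0
    simp only [Int.cast_one, Int.cast_zero, zpow_one, zpow_zero, mul_one] at h
    exact h
  · have h := hfapply 0 1
    simp only [Int.cast_one, Int.cast_zero, zpow_one, zpow_zero, one_mul] at h
    exact h
  · ext x
    constructor
    · rintro ⟨g, hg, hne, ⟨i, j, hij, hi, hj⟩, rfl⟩
      rw [← hrange] at hg
      obtain ⟨m, n, rfl⟩ := (hmem g).1 hg
      rw [← eWord] at hne hi hj ⊢
      rw [diagPow_apply_self_eq_one_iff hw, hN] at hi hj
      have hcases := exponents_modEq_of_dvd hbZ hdetZ ⟨s, hs⟩ hij hi hj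
      rw [← hN, ← diagPow_eq_one_iff hw, ← diagPow_eq_iff hw, ← diagPow_eq_iff hw] at hcases
      rcases hcases with h | h | h
      · exact absurd h hne
      · exact Or.inl (by rw [h, vT])
      · exact Or.inr (by rw [h, vT']; rfl)
    · have hgen {g : (Matrix (Fin 4) (Fin 4) ℂ)ˣ} (hg : g ∈ ({S₁, S₂, S₃, S₄} : Set _)) :
          g ∈ Subgroup.closure {S₁, S₂, S₃, S₄} := Subgroup.subset_closure hg
      have hndvd : ¬ ((4 * b : ℕ) : ℤ) ∣ 2 * b := fun h => by
        rw [← hw.zpow_eq_one_iff_dvd, hneg, Units.ext_iff] at h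
        norm_num at h
      rintro (rfl | rfl)
      · refine ⟨_, eT ▸ mul_mem (hgen (by simp)) (inv_mem (hgen (by simp))), ?_,
          ⟨2, 3, by decide, ?_, ?_⟩, vT⟩
        · exact fun h => hndvd ((diagPow_eq_one_iff hw _).1 h 0)
        · simp [vT]
        · simp [vT]
      · refine ⟨_, eT' ▸ mul_mem (hgen (by simp)) (inv_mem (hgen (by simp))), ?_,
          ⟨0, 1, by decide, ?_, ?_⟩, vT'⟩
        · exact fun h => hndvd ((diagPow_eq_one_iff hw _).1 h 2)
        · simp [vT']
        · simp [vT']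
end

section
/- The set X is invariant under G: for every g ∈ G and every point p = (x, y, u, v) ∈ X, the point g·p (obtained by multiplying each coordinate of p by the corresponding diagonal entry of g) again lies in X. -/
/-- The complete intersection cusp `X ⊆ ℂ⁴`: points `(x,y,u,v)` with
`x² + y² = u^α v^β` and `u² + v² = x^γ y^δ`. -/
def cuspX (α β γ δ : ℕ) : Set (Fin 4 → ℂ) :=
  {p | p 0 ^ 2 + p 1 ^ 2 = p 2 ^ α * p 3 ^ β ∧ p 2 ^ 2 + p 3 ^ 2 = p 0 ^ γ * p 1 ^ δ}

/-- The diagonal scalings `t` under which each of the two equations of `cuspX` is homogeneous. -/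
structure IsCuspScaling (α β γ δ : ℕ) (t : Fin 4 → ℂ) : Prop where
  ne_zero : ∀ i, t i ≠ 0
  sq_zero : t 0 ^ 2 = t 2 ^ α * t 3 ^ β
  sq_one : t 1 ^ 2 = t 2 ^ α * t 3 ^ β
  sq_two : t 2 ^ 2 = t 0 ^ γ * t 1 ^ δ
  sq_three : t 3 ^ 2 = t 0 ^ γ * t 1 ^ δ

namespace IsCuspScaling

variable {α β γ δ : ℕ} {s t : Fin 4 → ℂ}

theorem one : IsCuspScaling α β γ δ 1 := by
  constructor <;> simp

theorem mul (hs : IsCuspScaling α β γ δ s) (ht : IsCuspScaling α β γ δ t) :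
    IsCuspScaling α β γ δ (s * t) where
  ne_zero i := mul_ne_zero (hs.ne_zero i) (ht.ne_zero i)
  sq_zero := by simp only [Pi.mul_apply, mul_pow, hs.sq_zero, ht.sq_zero]; ring
  sq_one := by simp only [Pi.mul_apply, mul_pow, hs.sq_one, ht.sq_one]; ring
  sq_two := by simp only [Pi.mul_apply, mul_pow, hs.sq_two, ht.sq_two]; ring
  sq_three := by simp only [Pi.mul_apply, mul_pow, hs.sq_three, ht.sq_three]; ring

theorem inv (ht : IsCuspScaling α β γ δ t) : IsCuspScaling α β γ δ t⁻¹ where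
  ne_zero i := inv_ne_zero (ht.ne_zero i)
  sq_zero := by simp only [Pi.inv_apply, inv_pow, ht.sq_zero, mul_inv]
  sq_one := by simp only [Pi.inv_apply, inv_pow, ht.sq_one, mul_inv]
  sq_two := by simp only [Pi.inv_apply, inv_pow, ht.sq_two, mul_inv]
  sq_three := by simp only [Pi.inv_apply, inv_pow, ht.sq_three, mul_inv]

theorem mul_mem_cuspX (ht : IsCuspScaling α β γ δ t) {p : Fin 4 → ℂ}
    (hp : p ∈ cuspX α β γ δ) : (fun i => t i * p i) ∈ cuspX α β γ δ := by
  obtain ⟨hxy, huv⟩ := hp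
  constructor
  · simp only [mul_pow, ht.sq_zero, ht.sq_one]
    linear_combination t 2 ^ α * t 3 ^ β * hxy
  · simp only [mul_pow, ht.sq_two, ht.sq_three]
    linear_combination t 0 ^ γ * t 1 ^ δ * huv

end IsCuspScaling

/-- Every element of a subgroup generated by diagonal cusp scalings is a diagonal cusp scaling. -/
theorem exists_isCuspScaling_of_mem_closure {α β γ δ : ℕ}
    {S : Set (Matrix (Fin 4) (Fin 4) ℂ)ˣ}
    (hS : ∀ g ∈ S, ∃ t, IsCuspScaling α β γ δ t ∧
      (g : Matrix (Fin 4) (Fin 4) ℂ) = Matrix.diagonal t)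
    {g : (Matrix (Fin 4) (Fin 4) ℂ)ˣ} (hg : g ∈ Subgroup.closure S) :
    ∃ t, IsCuspScaling α β γ δ t ∧ (g : Matrix (Fin 4) (Fin 4) ℂ) = Matrix.diagonal t := by
  induction hg using Subgroup.closure_induction with
  | mem g hg => exact hS g hg
  | one => exact ⟨1, .one, by simp⟩
  | mul g h _ _ ihg ihh =>
    obtain ⟨s, hs, hgs⟩ := ihg
    obtain ⟨t, ht, hht⟩ := ihh
    exact ⟨s * t, hs.mul ht, by
      rw [Units.val_mul, hgs, hht, Matrix.diagonal_mul_diagonal]; rfl⟩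
  | inv g _ ih =>
    obtain ⟨t, ht, hgt⟩ := ih
    refine ⟨t⁻¹, ht.inv, Units.inv_eq_of_mul_eq_one_right ?_⟩
    rw [hgt, Matrix.diagonal_mul_diagonal, ← Matrix.diagonal_one]
    exact congrArg _ (funext fun i => mul_inv_cancel₀ (ht.ne_zero i))

/-- If `ω` is a primitive `4b`-th root of unity, then `ω ^ (2b) = -1`. -/
theorem IsPrimitiveRoot.pow_two_mul_eq_neg_one {ω : ℂ} {b : ℕ} (hb : 0 < b)
    (hω : IsPrimitiveRoot ω (4 * b)) : ω ^ (2 * b) = -1 :=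
  (hω.pow (by omega) (by ring : 4 * b = 2 * b * 2)).eq_neg_one_of_two_right

/-- The sign `(-1) ^ n` compensates the twist `ω ^ (2bc) = (-1) ^ c` when `n ≡ c` modulo `2`. -/
theorem neg_one_pow_mul_pow_eq_sq {a b c d n : ℕ} (hb : 0 < b) (hdet : a * d = b * c + 1)
    {ω : ℂ} (hω : IsPrimitiveRoot ω (4 * b)) (hn : n % 2 = c % 2) :
    (-1) ^ n * ω ^ (2 * (a * d)) = ω ^ 2 := by
  have hsign : (-1 : ℂ) ^ n * (-1) ^ c = 1 := by
    rw [← pow_add]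
    exact Even.neg_one_pow (Nat.even_iff.mpr (by omega))
  calc (-1) ^ n * ω ^ (2 * (a * d)) = (-1) ^ n * (ω ^ (2 * b)) ^ c * ω ^ 2 := by
        rw [hdet]; ring
    _ = ω ^ 2 := by rw [hω.pow_two_mul_eq_neg_one hb, hsign, one_mul]

theorem stmt_18 (a b c d : ℕ) (ha : 0 < a) (hb : 0 < b) (hc : 0 < c) (hd : 0 < d)
    (hdet : a * d = b * c + 1)
    (ω : ℂ) (hω : IsPrimitiveRoot ω (4 * b))
    (S₁ S₂ S₃ S₄ : (Matrix (Fin 4) (Fin 4) ℂ)ˣ)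
    (hS₁ : (S₁ : Matrix (Fin 4) (Fin 4) ℂ) = Matrix.diagonal ![-ω ^ a, ω ^ a, ω, ω])
    (hS₂ : (S₂ : Matrix (Fin 4) (Fin 4) ℂ) = Matrix.diagonal ![ω ^ a, -ω ^ a, ω, ω])
    (hS₃ : (S₃ : Matrix (Fin 4) (Fin 4) ℂ) = Matrix.diagonal ![ω, ω, -ω ^ d, ω ^ d])
    (hS₄ : (S₄ : Matrix (Fin 4) (Fin 4) ℂ) = Matrix.diagonal ![ω, ω, ω ^ d, -ω ^ d])
    (α β γ δ : ℕ) (hαβ : α + β = 2 * a) (hγδ : γ + δ = 2 * d)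
    (hpar : α % 2 = c % 2 ∧ β % 2 = c % 2 ∧ γ % 2 = c % 2 ∧ δ % 2 = c % 2) :
    ∀ g ∈ Subgroup.closure {S₁, S₂, S₃, S₄}, ∀ p ∈ cuspX α β γ δ,
      (fun i => (g : Matrix (Fin 4) (Fin 4) ℂ) i i * p i) ∈ cuspX α β γ δ := by
  have hω₀ : ω ≠ 0 := hω.ne_zero (by omega)
  obtain ⟨hα, hβ, hγ, hδ⟩ := hpar
  have hdet' : d * a = b * c + 1 := by rw [mul_comm, hdet]
  have hωαβ : ω ^ α * ω ^ β = (ω ^ a) ^ 2 := by rw [← pow_add, hαβ]; ring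
  have hωγδ : ω ^ γ * ω ^ δ = (ω ^ d) ^ 2 := by rw [← pow_add, hγδ]; ring
  have haγδ : (ω ^ a) ^ γ * (ω ^ a) ^ δ = ω ^ (2 * (a * d)) := by
    rw [← pow_add, hγδ]; ring
  have hdαβ : (ω ^ d) ^ α * (ω ^ d) ^ β = ω ^ (2 * (d * a)) := by
    rw [← pow_add, hαβ]; ring
  have hsγ := neg_one_pow_mul_pow_eq_sq hb hdet hω hγ
  have hsδ := neg_one_pow_mul_pow_eq_sq hb hdet hω hδ
  have hsα := neg_one_pow_mul_pow_eq_sq hb hdet' hω hα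
  have hsβ := neg_one_pow_mul_pow_eq_sq hb hdet' hω hβ
  rw [← haγδ] at hsγ hsδ
  rw [← hdαβ] at hsα hsβ
  intro g hg p hp
  obtain ⟨t, ht, hgt⟩ := exists_isCuspScaling_of_mem_closure (α := α) (β := β) (γ := γ) (δ := δ)
    (by
      rintro g (rfl | rfl | rfl | rfl)
      · refine ⟨_, ?_, hS₁⟩
        constructor
        · intro i; fin_cases i <;> simp [hω₀]
        all_goals
          simp [neg_pow (ω ^ a) γ]
          grind
      · refine ⟨_, ?_, hS₂⟩
        constructor
        · intro i; fin_cases i <;> simp [hω₀]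
        all_goals
          simp [neg_pow (ω ^ a) δ]
          grind
      · refine ⟨_, ?_, hS₃⟩
        constructor
        · intro i; fin_cases i <;> simp [hω₀]
        all_goals
          simp [neg_pow (ω ^ d) α]
          grind
      · refine ⟨_, ?_, hS₄⟩
        constructor
        · intro i; fin_cases i <;> simp [hω₀]
        all_goals
          simp [neg_pow (ω ^ d) β]
          grind) hg
  simpa [hgt] using ht.mul_mem_cuspX hp
end

section
/- Suppose c is odd. Then G acts freely on X ∖ {0}: if g ∈ G and p ∈ X with p ≠ (0,0,0,0) and g·p = p, then g is the identity matrix. -/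
/-- Exponents `e i` for which the product `S₁ ^ k 0 * S₂ ^ k 1 * S₃ ^ k 2 * S₄ ^ k 3` is the
diagonal matrix with entries `ω ^ e i`, using `ω ^ (2 * b) = -1`. -/
def cuspExponent (a b d : ℤ) (k : Fin 4 → ℤ) : Fin 4 → ℤ :=
  ![2 * b * k 0 + a * (k 0 + k 1) + (k 2 + k 3), 2 * b * k 1 + a * (k 0 + k 1) + (k 2 + k 3),
    2 * b * k 2 + (k 0 + k 1) + d * (k 2 + k 3), 2 * b * k 3 + (k 0 + k 1) + d * (k 2 + k 3)]

lemma cuspExponent_add (a b d : ℤ) (k l : Fin 4 → ℤ) :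
    cuspExponent a b d (k + l) = cuspExponent a b d k + cuspExponent a b d l := by
  ext i
  fin_cases i <;> simp [cuspExponent] <;> ring

lemma cuspExponent_zero (a b d : ℤ) : cuspExponent a b d 0 = 0 := by
  ext i
  fin_cases i <;> simp [cuspExponent]

/-- An element of a subgroup generated by units of the form `diagonal (ω ^ e k i)`, with `e` the
exponent map `cuspExponent`, is again of this form. -/
lemma exists_eq_diagonal_of_mem_closure {ω : ℂ} (h0 : ω ≠ 0) (a b d : ℤ)
    {s : Set (Matrix (Fin 4) (Fin 4) ℂ)ˣ}
    (hs : ∀ g ∈ s, ∃ k, (g : Matrix (Fin 4) (Fin 4) ℂ) =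
      Matrix.diagonal fun i => ω ^ cuspExponent a b d k i)
    {g : (Matrix (Fin 4) (Fin 4) ℂ)ˣ} (hg : g ∈ Subgroup.closure s) :
    ∃ k, (g : Matrix (Fin 4) (Fin 4) ℂ) =
      Matrix.diagonal fun i => ω ^ cuspExponent a b d k i := by
  induction hg using Subgroup.closure_induction with
  | mem g hg => exact hs g hg
  | one => exact ⟨0, by simp [cuspExponent_zero]⟩
  | mul g h _ _ ihg ihh =>
    obtain ⟨k, hk⟩ := ihg
    obtain ⟨l, hl⟩ := ihh
    refine ⟨k + l, ?_⟩
    simp [hk, hl, cuspExponent_add, zpow_add₀ h0]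
  | inv g _ ih =>
    obtain ⟨k, hk⟩ := ih
    refine ⟨-k, Units.inv_eq_of_mul_eq_one_right ?_⟩
    have hadd := cuspExponent_add a b d k (-k)
    rw [add_neg_cancel, cuspExponent_zero] at hadd
    rw [hk, Matrix.diagonal_mul_diagonal, ← Matrix.diagonal_one]
    congr 1
    ext i
    rw [← zpow_add₀ h0, ← Pi.add_apply, ← hadd]
    simp

/-- If three of the exponents are divisible by `4 * b`, then so is the fourth. -/
lemma dvd_cuspExponent_of_three {a b d : ℤ} (hb : b ≠ 0) (k : Fin 4 → ℤ) (j : Fin 4)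
    (h : ∀ i ≠ j, 4 * b ∣ cuspExponent a b d k i) (i : Fin 4) :
    4 * b ∣ cuspExponent a b d k i := by
  have even_of_pair {x y t : ℤ} (hx : 4 * b ∣ 2 * b * x + t) (hy : 4 * b ∣ 2 * b * y + t) :
      ∃ q, x = y + 2 * q := by
    obtain ⟨q, hq⟩ := dvd_sub hx hy
    exact ⟨q, mul_left_cancel₀ (mul_ne_zero two_ne_zero hb) (by linear_combination hq)⟩
  have transfer {x y q t : ℤ} (hxy : x = y + 2 * q) :
      4 * b ∣ 2 * b * x + t ↔ 4 * b ∣ 2 * b * y + t := by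
    rw [show 2 * b * x + t = 2 * b * y + t + 4 * b * q by rw [hxy]; ring]
    exact dvd_add_left (dvd_mul_right _ _)
  have even_left {x y q r t u : ℤ} (hxy : x = y + 2 * q)
      (ht : 4 * b ∣ 2 * b * r + (t + u) + d * (x + y)) :
      ∃ s, t = u + 2 * s := by
    obtain ⟨w, hw⟩ := ht
    exact ⟨2 * b * w - b * r - u - d * (y + q), by rw [hxy] at hw; linear_combination hw⟩
  have even_right {x y q r t u : ℤ} (hxy : x = y + 2 * q)
      (ht : 4 * b ∣ 2 * b * r + a * (x + y) + (t + u)) :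
      ∃ s, t = u + 2 * s := by
    obtain ⟨w, hw⟩ := ht
    exact ⟨2 * b * w - b * r - u - a * (y + q), by rw [hxy] at hw; linear_combination hw⟩
  by_cases hij : i = j
  swap
  · exact h i hij
  subst hij
  have h0 := h 0
  have h1 := h 1
  have h2 := h 2
  have h3 := h 3
  simp only [cuspExponent, Matrix.cons_val] at h0 h1 h2 h3
  fin_cases i <;> simp [cuspExponent] at h0 h1 h2 h3 ⊢
  · obtain ⟨q, hq⟩ := even_of_pair (by simpa only [add_assoc] using h2)
      (by simpa only [add_assoc] using h3)
    obtain ⟨s, hs⟩ := even_left hq h2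
    rw [add_assoc] at h1 ⊢
    exact (transfer hs).2 h1
  · obtain ⟨q, hq⟩ := even_of_pair (by simpa only [add_assoc] using h2)
      (by simpa only [add_assoc] using h3)
    obtain ⟨s, hs⟩ := even_left hq h2
    rw [add_assoc] at h0 ⊢
    exact (transfer hs).1 h0
  · obtain ⟨q, hq⟩ := even_of_pair (by simpa only [add_assoc] using h0)
      (by simpa only [add_assoc] using h1)
    obtain ⟨s, hs⟩ := even_right hq h0
    rw [add_assoc] at h3 ⊢
    exact (transfer hs).2 h3
  · obtain ⟨q, hq⟩ := even_of_pair (by simpa only [add_assoc] using h0)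
      (by simpa only [add_assoc] using h1)
    obtain ⟨s, hs⟩ := even_right hq h0
    rw [add_assoc] at h2 ⊢
    exact (transfer hs).1 h2

/-- A nonzero point of the cusp has at most one vanishing coordinate. -/
lemma exists_forall_ne_zero_of_mem_cuspX {α β γ δ : ℕ} (hα : α ≠ 0) (hβ : β ≠ 0) (hγ : γ ≠ 0)
    (hδ : δ ≠ 0) {p : Fin 4 → ℂ} (hp : p ∈ cuspX α β γ δ) (hp0 : p ≠ 0) :
    ∃ j, ∀ i ≠ j, p i ≠ 0 := by
  obtain ⟨hxy, huv⟩ := hp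
  have hne : ¬(p 0 = 0 ∧ p 1 = 0 ∧ p 2 = 0 ∧ p 3 = 0) := fun ⟨h0, h1, h2, h3⟩ =>
    hp0 (by ext i; fin_cases i <;> assumption)
  simp only [Fin.exists_fin_succ, Fin.forall_fin_succ]
  by_cases h0 : p 0 = 0 <;> by_cases h1 : p 1 = 0 <;> by_cases h2 : p 2 = 0 <;>
    by_cases h3 : p 3 = 0 <;> simp_all

theorem stmt_19 (a b c d : ℕ) (ha : 0 < a) (hb : 0 < b) (hc : 0 < c) (hd : 0 < d)
    (hdet : a * d = b * c + 1) (hcodd : Odd c)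
    (ω : ℂ) (hω : IsPrimitiveRoot ω (4 * b))
    (S₁ S₂ S₃ S₄ : (Matrix (Fin 4) (Fin 4) ℂ)ˣ)
    (hS₁ : (S₁ : Matrix (Fin 4) (Fin 4) ℂ) = Matrix.diagonal ![-ω ^ a, ω ^ a, ω, ω])
    (hS₂ : (S₂ : Matrix (Fin 4) (Fin 4) ℂ) = Matrix.diagonal ![ω ^ a, -ω ^ a, ω, ω])
    (hS₃ : (S₃ : Matrix (Fin 4) (Fin 4) ℂ) = Matrix.diagonal ![ω, ω, -ω ^ d, ω ^ d])
    (hS₄ : (S₄ : Matrix (Fin 4) (Fin 4) ℂ) = Matrix.diagonal ![ω, ω, ω ^ d, -ω ^ d])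
    (α β γ δ : ℕ) (hαβ : α + β = 2 * a) (hγδ : γ + δ = 2 * d)
    (hpar : α % 2 = c % 2 ∧ β % 2 = c % 2 ∧ γ % 2 = c % 2 ∧ δ % 2 = c % 2) :
    ∀ g ∈ Subgroup.closure {S₁, S₂, S₃, S₄}, ∀ p ∈ cuspX α β γ δ, p ≠ 0 →
      (fun i => (g : Matrix (Fin 4) (Fin 4) ℂ) i i * p i) = p → g = 1 := by
  have hb' : (b : ℤ) ≠ 0 := by exact_mod_cast hb.ne'
  have h0 : ω ≠ 0 := hω.ne_zero (by positivity)
  have hneg : ω ^ (2 * (b : ℤ)) = -1 := by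
    have h : IsPrimitiveRoot (ω ^ (2 * b)) 2 := hω.pow (by positivity) (by ring)
    exact_mod_cast h.eq_neg_one_of_two_right
  intro g hg p hp hp0 hgp
  have hgen : ∀ g ∈ ({S₁, S₂, S₃, S₄} : Set (Matrix (Fin 4) (Fin 4) ℂ)ˣ),
      ∃ k, (g : Matrix (Fin 4) (Fin 4) ℂ) =
        Matrix.diagonal fun i => ω ^ cuspExponent a b d k i := by
    rintro g (rfl | rfl | rfl | rfl)
    · refine ⟨![1, 0, 0, 0], hS₁.trans (congrArg _ ?_)⟩
      ext i
      fin_cases i <;> simp [cuspExponent, zpow_add₀ h0, hneg]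
    · refine ⟨![0, 1, 0, 0], hS₂.trans (congrArg _ ?_)⟩
      ext i
      fin_cases i <;> simp [cuspExponent, zpow_add₀ h0, hneg]
    · refine ⟨![0, 0, 1, 0], hS₃.trans (congrArg _ ?_)⟩
      ext i
      fin_cases i <;> simp [cuspExponent, zpow_add₀ h0, hneg]
    · refine ⟨![0, 0, 0, 1], hS₄.trans (congrArg _ ?_)⟩
      ext i
      fin_cases i <;> simp [cuspExponent, zpow_add₀ h0, hneg]
  obtain ⟨k, hk⟩ := exists_eq_diagonal_of_mem_closure h0 a b d hgen hg
  have hc2 : c % 2 = 1 := Nat.odd_iff.mp hcodd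
  obtain ⟨j, hj⟩ := exists_forall_ne_zero_of_mem_cuspX (by omega) (by omega) (by omega)
    (by omega) hp hp0
  have hdvd := dvd_cuspExponent_of_three (a := a) (d := d) hb' k j fun i hi => by
    have hfix := congrFun hgp i
    rw [hk, Matrix.diagonal_apply_eq, mul_eq_right₀ (hj i hi)] at hfix
    exact_mod_cast (hω.zpow_eq_one_iff_dvd _).mp hfix
  ext1
  rw [hk, Units.val_one, ← Matrix.diagonal_one]
  congr 1
  ext i
  exact (hω.zpow_eq_one_iff_dvd _).mpr (by exact_mod_cast hdvd i)
end
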